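/- arXiv:1208.1412 — 5 statements merged into one kernel-verified Lean document; each statement's English description precedes it below -/
import Mathlib

section
/- Let p be a prime with p ≡ 1 (mod 20). Then p is representable by x²+20y² if and only if p is representable by x²+100y². Let p be a prime with p ≡ 9 (mod 20). Then p is representable by exactly one of the quadratic forms x²+20y² and x²+100y². -/
open scoped NumberTheorySymbols in
/-- Coprime case: an odd divisor of a primitive value of `b² - 5y²` prime to 5 is `±1` mod 5. -/
lemma base_case (n b y : ℤ) (hn : n % 2 = 1) (h5 : ¬ (5 : ℤ) ∣ n) (hby : IsCoprime b y)
    (hd : n ∣ b ^ 2 - 5 * y ^ 2) : ((n : ℤ) : ZMod 5) ^ 2 = 1 := by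
  have h5p : Prime (5 : ℤ) := by norm_num
  have h5n : IsCoprime (5 : ℤ) n := (h5p.coprime_iff_not_dvd).2 h5
  have hyn : IsCoprime y n := by
    obtain ⟨k, hk⟩ := hd
    have h1 : IsCoprime y (b ^ 2) := hby.symm.pow_right
    have h2 : IsCoprime y (n * k) := by
      rw [← hk]
      have := h1.add_mul_left_right (-5 * y)
      have e : b ^ 2 - 5 * y ^ 2 = b ^ 2 + y * (-5 * y) := by ring
      rw [e]; exact this
    exact h2.of_mul_right_left
  have hbn : IsCoprime b n := by
    have h1 : IsCoprime (5 * y ^ 2) n := h5n.mul_left hyn.pow_left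
    obtain ⟨k, hk⟩ := hd
    have h2 : IsCoprime (b ^ 2) n := by
      have := h1.add_mul_left_left k
      have e : b ^ 2 = 5 * y ^ 2 + n * k := by linarith
      rw [e]; exact this
    exact (IsCoprime.pow_left_iff (by norm_num)).1 h2
  set m := n.natAbs with hm
  have gy : y.gcd (m : ℤ) = 1 := by
    rw [← Int.isCoprime_iff_gcd_eq_one]; rw [hm, Int.natCast_natAbs]; exact hyn.abs_right
  have gb : b.gcd (m : ℤ) = 1 := by
    rw [← Int.isCoprime_iff_gcd_eq_one]; rw [hm, Int.natCast_natAbs]; exact hbn.abs_right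
  have hmd : (m : ℤ) ∣ b ^ 2 - 5 * y ^ 2 := by rw [hm]; simpa using hd
  have e1 : J(b ^ 2 | m) = J(5 * y ^ 2 | m) := by
    apply jacobiSym.mod_left'
    exact (Int.modEq_iff_dvd.2 hmd).symm
  rw [jacobiSym.sq_one' gb, jacobiSym.mul_left, jacobiSym.sq_one' gy, mul_one] at e1
  have hmo : Odd m := by
    rw [hm, Int.natAbs_odd]; exact Int.odd_iff.2 hn
  have e2 := jacobiSym.quadratic_reciprocity_one_mod_four (a := 5) (b := m) (by norm_num) hmo
  push_cast at e2
  rw [← e1, jacobiSym.mod_left] at e2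
  have hr : (n : ZMod 5) ^ 2 = ((m : ℕ) : ZMod 5) ^ 2 := by
    have : n ^ 2 = (m : ℤ) ^ 2 := by rw [hm]; simp
    have := congrArg (fun z : ℤ => (z : ZMod 5)) this
    push_cast at this
    exact this
  rw [hr]
  have hmm : ((m : ℕ) : ZMod 5) = ((m % 5 : ℕ) : ZMod 5) := by simp
  rw [hmm]
  have hlt : m % 5 < 5 := Nat.mod_lt _ (by norm_num)
  have e3 : (1 : ℤ) = J(((m % 5 : ℕ) : ℤ) | 5) := by push_cast; exact e2
  generalize m % 5 = r at e3 hlt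
  have j2 : J(2 | 5) = -1 := by rw [jacobiSym.at_two (by decide)]; decide
  interval_cases r
  · rw [Nat.cast_zero, jacobiSym.zero_left (by norm_num)] at e3; norm_num at e3
  · decide
  · push_cast at e3; rw [j2] at e3; norm_num at e3
  · have : J(((3 : ℕ) : ℤ) | 5) = J(-2 | 5) := jacobiSym.mod_left' (by norm_num)
    rw [this, jacobiSym.at_neg_two (by decide)] at e3
    revert e3; decide
  · decide

lemma descent (k : ℕ) : ∀ (n m b y : ℤ), y.natAbs = k → y ≠ 0 → n % 2 = 1 → ¬ (5 : ℤ) ∣ n →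
    n * m = b ^ 2 - 5 * y ^ 2 →
    (∀ q : ℤ, Prime q → q ∣ n → q ∣ m → q ∣ b → q ∣ y → False) →
    ((n : ℤ) : ZMod 5) ^ 2 = 1 := by
  induction k using Nat.strong_induction_on with
  | _ k ih =>
    intro n m b y hk hy hn h5 h hq
    by_cases hby : IsCoprime b y
    · exact base_case n b y hn h5 hby ⟨m, h.symm⟩
    · have : ∃ q : ℤ, Prime q ∧ q ∣ b ∧ q ∣ y := by
        by_contra hne
        push Not at hne
        apply hby
        apply isCoprime_of_prime_dvd
        · rintro ⟨-, h0⟩; exact hy h0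
        · exact hne
      obtain ⟨q, hqp, ⟨b', rfl⟩, ⟨y', rfl⟩⟩ := this
      have hq0 : q ≠ 0 := hqp.ne_zero
      have hy' : y' ≠ 0 := right_ne_zero_of_mul hy
      have hlt : y'.natAbs < k := by
        rw [← hk, Int.natAbs_mul]
        have h1 : 1 < q.natAbs := (Int.prime_iff_natAbs_prime.1 hqp).one_lt
        have h2 : 0 < y'.natAbs := Int.natAbs_pos.2 hy'
        nlinarith
      have h2 : n * m = q ^ 2 * (b' ^ 2 - 5 * y' ^ 2) := by rw [h]; ring
      have hd : q ^ 2 ∣ n * m := ⟨_, h2⟩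
      by_cases hqn : q ∣ n
      · have hqm : ¬ q ∣ m := fun hh => hq q hqp hqn hh (dvd_mul_right _ _) (dvd_mul_right _ _)
        have hc : IsCoprime (q ^ 2) m := ((hqp.coprime_iff_not_dvd).2 hqm).pow_left
        obtain ⟨n', rfl⟩ := hc.dvd_of_dvd_mul_right hd
        have hn' : n' % 2 = 1 := by
          rw [← Int.odd_iff] at hn ⊢
          exact (Int.odd_mul.1 hn).2
        have h5' : ¬ (5 : ℤ) ∣ n' := fun hh => h5 (hh.mul_left _)
        have h3 : n' * m = b' ^ 2 - 5 * y' ^ 2 := by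
          apply mul_left_cancel₀ (pow_ne_zero 2 hq0)
          rw [← h2]; ring
        have := ih _ hlt n' m b' y' rfl hy' hn' h5' h3
          (fun r hr h1 h2 h3 h4 => hq r hr (h1.mul_left _) h2 (h3.mul_left _) (h4.mul_left _))
        have hq5 : (q : ZMod 5) ≠ 0 := by
          intro hh
          apply h5
          have : (5 : ℤ) ∣ q := (ZMod.intCast_zmod_eq_zero_iff_dvd q 5).1 hh
          exact (this.trans (dvd_pow_self q (by norm_num))).mul_right _
        push_cast
        rw [mul_pow, this]
        revert hq5
        generalize (q : ZMod 5) = z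
        revert z
        decide
      · have hc : IsCoprime (q ^ 2) n := ((hqp.coprime_iff_not_dvd).2 hqn).pow_left
        obtain ⟨m', rfl⟩ := hc.dvd_of_dvd_mul_left hd
        have h3 : n * m' = b' ^ 2 - 5 * y' ^ 2 := by
          apply mul_left_cancel₀ (pow_ne_zero 2 hq0)
          rw [← h2]; ring
        exact ih _ hlt n m' b' y' rfl hy' hn h5 h3
          (fun r hr h1 h2 h3 h4 => hq r hr h1 (h2.mul_left _) (h3.mul_left _) (h4.mul_left _))

lemma not_sq_prime (p : ℕ) (hp : p.Prime) (x : ℤ) : (p : ℤ) ≠ x ^ 2 := by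
  intro h
  have := (Nat.prime_iff_prime_int.1 hp).irreducible.not_isSquare
  exact this ⟨x, by rw [h]; ring⟩

lemma core (p : ℕ) (hp : p.Prime) (a b x y : ℤ) (h1 : (p : ℤ) = a ^ 2 + b ^ 2)
    (h2 : (p : ℤ) = x ^ 2 + 5 * y ^ 2) (ho : (x + a) % 2 = 1)
    (h5 : (x : ZMod 5) + a ≠ 0) : ((x : ZMod 5) + a) ^ 2 = 1 := by
  have hy : y ≠ 0 := by
    rintro rfl
    exact not_sq_prime p hp x (by linarith)
  have := descent _ (x + a) (x - a) b y rfl hy ho ?_ (by linarith) ?_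
  · push_cast at this; exact this
  · intro hh
    apply h5
    have := (ZMod.intCast_zmod_eq_zero_iff_dvd (x + a) 5).2 hh
    push_cast at this; exact this
  · intro q hq d1 d2 d3 d4
    have hpp := Nat.prime_iff_prime_int.1 hp
    have hq2 : ¬ q ∣ 2 := by
      intro hh
      have h22 : (2 : ℤ) ∣ q := by
        have : Associated q 2 := hq.associated_of_dvd Int.prime_two hh
        exact this.symm.dvd
      have := h22.trans d1
      omega
    have hqx : q ∣ x := by
      have : q ∣ 2 * x := by
        have := dvd_add d1 d2
        ring_nf at this ⊢; exact this
      exact (hq.dvd_or_dvd this).resolve_left hq2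
    have hqp : q * q ∣ (p : ℤ) := by
      obtain ⟨u, rfl⟩ := hqx
      obtain ⟨v, rfl⟩ := d4
      exact ⟨u ^ 2 + 5 * v ^ 2, by rw [h2]; ring⟩
    exact hq.not_unit (hpp.irreducible.squarefree q hqp)

lemma zmod_fact1 : ∀ a b x : ZMod 5, a ^ 2 + b ^ 2 = x ^ 2 → (x + b ≠ 0 → (x + b) ^ 2 = 1) →
    (-x + b ≠ 0 → (-x + b) ^ 2 = 1) →
    (x ^ 2 = 1 → b = 0) ∧ (x ^ 2 = 4 → b ≠ 0) := by decide

lemma zmod_fact2 : ∀ a b x : ZMod 5, a ^ 2 + b ^ 2 = x ^ 2 → (x + a ≠ 0 → (x + a) ^ 2 = 1) →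
    (-x + a ≠ 0 → (-x + a) ^ 2 = 1) →
    (x ^ 2 = 1 → b ≠ 0) ∧ (x ^ 2 = 4 → b = 0) := by decide

lemma key (p : ℕ) (hp : p.Prime) (a b x y : ℤ) (h1 : (p : ℤ) = a ^ 2 + b ^ 2)
    (h2 : (p : ℤ) = x ^ 2 + 5 * y ^ 2) (ha : a % 2 = 1) (hb : b % 2 = 0) :
    (p % 5 = 1 → (y % 2 = 0 ↔ (5 : ℤ) ∣ b)) ∧ (p % 5 = 4 → (y % 2 = 0 ↔ ¬ (5 : ℤ) ∣ b)) := by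
  have e1 : (p : ZMod 5) = (a : ZMod 5) ^ 2 + (b : ZMod 5) ^ 2 := by
    have := congrArg (fun z : ℤ => (z : ZMod 5)) h1
    push_cast at this; exact this
  have e2 : (p : ZMod 5) = (x : ZMod 5) ^ 2 := by
    have := congrArg (fun z : ℤ => (z : ZMod 5)) h2
    push_cast at this
    rw [this, show (5 : ZMod 5) = 0 from rfl]; ring
  have hmod : ∀ r : ℕ, p % 5 = r → (x : ZMod 5) ^ 2 = (r : ZMod 5) := by
    intro r hr
    rw [← e2, ← hr]; simp
  have hdb : (5 : ℤ) ∣ b ↔ (b : ZMod 5) = 0 := (ZMod.intCast_zmod_eq_zero_iff_dvd b 5).symm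
  have hxy : x ^ 2 + 5 * y ^ 2 = a ^ 2 + b ^ 2 := by linarith
  have hpar : (x + y) % 2 = 1 := by
    have : Odd (x ^ 2 + 5 * y ^ 2) := by
      rw [hxy]
      exact ((Int.odd_iff.2 ha).pow).add_even ((Int.even_iff.2 hb).pow_of_ne_zero (by norm_num))
    rw [← Int.odd_iff]
    have h5 : ¬ Even (5 : ℤ) := by decide
    simp only [← Int.not_even_iff_odd, Int.even_add, Int.even_mul, Int.even_pow] at this ⊢
    tauto
  have h1' : (p : ℤ) = b ^ 2 + a ^ 2 := by linarith
  have h2' : (p : ℤ) = (-x) ^ 2 + 5 * y ^ 2 := by linarith [neg_sq x]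
  rcases Int.emod_two_eq_zero_or_one y with hy | hy
  · have c1 := core p hp b a x y h1' h2 (by omega)
    have c2 := core p hp b a (-x) y h1' h2' (by omega)
    push_cast at c2
    have := zmod_fact1 a b x (by rw [← e1, e2]) c1 c2
    rw [hdb]
    refine ⟨fun h => ⟨fun _ => this.1 (by simpa using hmod 1 h), fun _ => hy⟩,
      fun h => ⟨fun _ => this.2 (by simpa using hmod 4 h), fun _ => hy⟩⟩
  · have c1 := core p hp a b x y h1 h2 (by omega)
    have c2 := core p hp a b (-x) y h1 h2' (by omega)
    push_cast at c2
    have := zmod_fact2 a b x (by rw [← e1, e2]) c1 c2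
    rw [hdb]
    have hy' : ¬ y % 2 = 0 := by omega
    refine ⟨fun h => ⟨fun h' => absurd h' hy', fun h' => absurd h' (this.1 (by simpa using hmod 1 h))⟩,
      fun h => ⟨fun h' => absurd h' hy', fun h' => absurd (this.2 (by simpa using hmod 4 h)) h'⟩⟩

/-- Thue's lemma. -/
lemma thue (p : ℕ) (hp : p.Prime) (s : ZMod p) :
    ∃ x y : ℤ, (x : ZMod p) = s * y ∧ (x ≠ 0 ∨ y ≠ 0) ∧ x ^ 2 < p ∧ y ^ 2 < p := by
  haveI : Fact p.Prime := ⟨hp⟩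
  set r := Nat.sqrt p with hr
  let S := Finset.range (r + 1) ×ˢ Finset.range (r + 1)
  have hc : (Finset.univ : Finset (ZMod p)).card < S.card := by
    rw [Finset.card_univ, ZMod.card, Finset.card_product, Finset.card_range]
    exact Nat.lt_succ_sqrt p
  obtain ⟨u, hu, v, hv, huv, hf⟩ := Finset.exists_ne_map_eq_of_card_lt_of_maps_to hc
    (f := fun w : ℕ × ℕ => (w.1 : ZMod p) - s * w.2) (fun _ _ => Finset.mem_coe.2 (Finset.mem_univ _))
  simp only [S, Finset.mem_product, Finset.mem_range] at hu hv
  have hrp : r * r < p := by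
    apply lt_of_le_of_ne (Nat.sqrt_le p)
    intro h
    apply not_sq_prime p hp r
    rw [← h]; push_cast; ring
  have bound : ∀ c d : ℕ, c < r + 1 → d < r + 1 → ((c : ℤ) - d) ^ 2 < p := by
    intro c d h1 h2
    have h3 : ((c : ℤ) - d) ^ 2 ≤ (r : ℤ) ^ 2 := by
      apply sq_le_sq' <;> omega
    have h4 : ((r : ℤ) * r) < p := by exact_mod_cast hrp
    nlinarith
  refine ⟨(u.1 : ℤ) - v.1, (u.2 : ℤ) - v.2, ?_, ?_, bound _ _ hu.1 hv.1, bound _ _ hu.2 hv.2⟩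
  · push_cast
    linear_combination hf
  · by_contra! hh
    apply huv
    ext <;> omega

lemma exists_rep (p : ℕ) (hp : p.Prime) (h : p % 20 = 1 ∨ p % 20 = 9) :
    ∃ x y : ℤ, (p : ℤ) = x ^ 2 + 5 * y ^ 2 := by
  haveI : Fact p.Prime := ⟨hp⟩
  haveI : Fact (Nat.Prime 5) := ⟨by norm_num⟩
  have hs1 : IsSquare (-1 : ZMod p) := ZMod.exists_sq_eq_neg_one_iff.2 (by omega)
  have hs5 : IsSquare ((5 : ℕ) : ZMod p) := by
    rw [ZMod.exists_sq_eq_prime_iff_of_mod_four_eq_one (by omega) (by norm_num)]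
    have : ((p : ℕ) : ZMod 5) = ((p % 5 : ℕ) : ZMod 5) := by simp
    rw [this]
    have : p % 5 = 1 ∨ p % 5 = 4 := by omega
    rcases this with h | h <;> rw [h]
    · exact ⟨1, by rfl⟩
    · exact ⟨2, by rfl⟩
  obtain ⟨s, hs⟩ := hs1.mul hs5
  push_cast at hs
  obtain ⟨x, y, hxy, hne, hx, hy⟩ := thue p hp s
  have hd : (p : ℤ) ∣ x ^ 2 + 5 * y ^ 2 := by
    rw [← ZMod.intCast_zmod_eq_zero_iff_dvd]
    push_cast
    rw [hxy]
    linear_combination (-(y : ZMod p) ^ 2) * hs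
  obtain ⟨k, hk⟩ := hd
  have hp0 : (0 : ℤ) < p := by exact_mod_cast hp.pos
  have hpos : 0 < x ^ 2 + 5 * y ^ 2 := by
    rcases hne with h | h <;> positivity
  have hk0 : 0 < k := by
    rw [hk] at hpos
    exact pos_of_mul_pos_right hpos hp0.le
  have hk6 : k < 6 := by nlinarith
  have hx5 : x ^ 2 % 5 = 0 ∨ x ^ 2 % 5 = 1 ∨ x ^ 2 % 5 = 4 := by
    have : x % 5 = 0 ∨ x % 5 = 1 ∨ x % 5 = 2 ∨ x % 5 = 3 ∨ x % 5 = 4 := by omega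
    rcases this with h | h | h | h | h <;> simp [pow_two, Int.mul_emod, h]
  have sq4 : ∀ z : ℤ, (z % 2 = 1 ∧ z ^ 2 % 4 = 1) ∨ (z % 2 = 0 ∧ z ^ 2 % 4 = 0) := by
    intro z
    rcases Int.emod_two_eq_zero_or_one z with h | h
    · right
      obtain ⟨w, rfl⟩ := Int.dvd_of_emod_eq_zero h
      refine ⟨h, ?_⟩
      ring_nf; omega
    · left
      refine ⟨h, ?_⟩
      rcases (by omega : z % 4 = 1 ∨ z % 4 = 3) with h | h <;> simp [pow_two, Int.mul_emod, h]
  interval_cases k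
  · exact ⟨x, y, by linarith⟩
  · omega
  · omega
  · have hxe : x % 2 = 0 ∧ y % 2 = 0 := by
      have := sq4 x
      have := sq4 y
      omega
    obtain ⟨u, rfl⟩ := Int.dvd_of_emod_eq_zero hxe.1
    obtain ⟨v, rfl⟩ := Int.dvd_of_emod_eq_zero hxe.2
    exact ⟨u, v, by nlinarith⟩
  · have : (5 : ℤ) ∣ x ^ 2 := by omega
    obtain ⟨u, rfl⟩ := (by norm_num : Prime (5 : ℤ)).dvd_of_dvd_pow this
    exact ⟨y, u, by nlinarith⟩

lemma exists_two_sq (p : ℕ) (hp : p.Prime) (h : p % 4 = 1) :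
    ∃ a b : ℤ, (p : ℤ) = a ^ 2 + b ^ 2 ∧ a % 2 = 1 ∧ b % 2 = 0 := by
  haveI : Fact p.Prime := ⟨hp⟩
  obtain ⟨a, b, hab⟩ := Nat.Prime.sq_add_sq (p := p) (by omega)
  have hab' : (p : ℤ) = (a : ℤ) ^ 2 + (b : ℤ) ^ 2 := by rw [← hab]; push_cast; ring
  have hodd : Odd ((a : ℤ) ^ 2 + (b : ℤ) ^ 2) := by
    rw [← hab', Int.odd_iff]; omega
  have : Odd (a : ℤ) ∧ Even (b : ℤ) ∨ Odd (b : ℤ) ∧ Even (a : ℤ) := by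
    simp only [← Int.not_even_iff_odd, Int.even_add, Int.even_pow] at hodd ⊢
    tauto
  rcases this with ⟨h1, h2⟩ | ⟨h1, h2⟩
  · exact ⟨a, b, hab', Int.odd_iff.1 h1, Int.even_iff.1 h2⟩
  · exact ⟨b, a, by linarith, Int.odd_iff.1 h1, Int.even_iff.1 h2⟩

lemma main_aux (p : ℕ) (hp : p.Prime) (h : p % 20 = 1 ∨ p % 20 = 9) :
    ∃ b y : ℤ, ((∃ x y : ℤ, (p : ℤ) = x ^ 2 + 20 * y ^ 2) ↔ y % 2 = 0) ∧
      ((∃ x y : ℤ, (p : ℤ) = x ^ 2 + 100 * y ^ 2) ↔ (5 : ℤ) ∣ b) ∧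
      (p % 5 = 1 → (y % 2 = 0 ↔ (5 : ℤ) ∣ b)) ∧ (p % 5 = 4 → (y % 2 = 0 ↔ ¬ (5 : ℤ) ∣ b)) := by
  obtain ⟨x, y, hxy⟩ := exists_rep p hp h
  obtain ⟨a, b, hab, ha, hb⟩ := exists_two_sq p hp (by omega)
  have K := key p hp a b x y hab hxy ha hb
  have h5 : p % 5 = 1 ∨ p % 5 = 4 := by omega
  refine ⟨b, y, ⟨?_, ?_⟩, ⟨?_, ?_⟩, K⟩
  · rintro ⟨u, v, huv⟩
    have K2 := key p hp a b u (2 * v) hab (by rw [huv]; ring) ha hb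
    have : 2 * v % 2 = 0 := by omega
    rcases h5 with h5 | h5
    · rw [K.1 h5, ← K2.1 h5]; exact this
    · rw [K.2 h5, ← K2.2 h5]; exact this
  · intro hy
    obtain ⟨v, rfl⟩ := Int.dvd_of_emod_eq_zero hy
    exact ⟨x, v, by rw [hxy]; ring⟩
  · rintro ⟨u, v, huv⟩
    have hu : u % 2 = 1 := by
      have : Odd (u ^ 2) := by rw [Int.odd_iff]; omega
      exact Int.odd_iff.1 ((Int.odd_pow' (by norm_num)).1 this)
    have K2 := key p hp u (10 * v) x y (by rw [huv]; ring) hxy hu (by omega)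
    have h10 : (5 : ℤ) ∣ 10 * v := by omega
    rcases h5 with h5 | h5
    · rw [← K.1 h5, K2.1 h5]; exact h10
    · rw [← not_not (a := (5 : ℤ) ∣ b), ← K.2 h5, K2.2 h5, not_not]; exact h10
  · intro h5b
    obtain ⟨c, rfl⟩ : (10 : ℤ) ∣ b := by omega
    exact ⟨a, c, by rw [hab]; ring⟩

theorem kaplansky_like_1 (p : ℕ) (hp : p.Prime) :
    (p % 20 = 1 → ((∃ x y : ℤ, (p : ℤ) = x ^ 2 + 20 * y ^ 2) ↔
      (∃ x y : ℤ, (p : ℤ) = x ^ 2 + 100 * y ^ 2))) ∧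
    (p % 20 = 9 → Xor' (∃ x y : ℤ, (p : ℤ) = x ^ 2 + 20 * y ^ 2)
      (∃ x y : ℤ, (p : ℤ) = x ^ 2 + 100 * y ^ 2)) := by
  constructor
  · intro h
    obtain ⟨b, y, h1, h2, h3, -⟩ := main_aux p hp (Or.inl h)
    rw [h1, h2]
    exact h3 (by omega)
  · intro h
    obtain ⟨b, y, h1, h2, -, h3⟩ := main_aux p hp (Or.inr h)
    rw [h1, h2, h3 (by omega)]
    unfold Xor'
    tauto
end

section
/- Let p be a prime with p ≡ 1, 65, or 81 (mod 112). Then p is representable by x²+14y² if and only if p is representable by x²+448y². Let p be a prime with p ≡ 9, 25, or 57 (mod 112). Then p is representable by exactly one of the quadratic forms x²+14y² and x²+448y². -/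
lemma reduce_form (n p : ℤ) (hn : 0 < n) : ∀ k : ℕ, ∀ A B C X Y : ℤ, 0 < A → A ≤ k →
    A * C - B ^ 2 = n → p = A * X ^ 2 + 2 * B * X * Y + C * Y ^ 2 →
    ∃ A B C X Y : ℤ, 0 < A ∧ -A ≤ 2 * B ∧ 2 * B ≤ A ∧ A ≤ C ∧ A * C - B ^ 2 = n ∧
      p = A * X ^ 2 + 2 * B * X * Y + C * Y ^ 2 := by
  intro k
  induction k with
  | zero => intro A B C X Y h1 h2; simp at h2; omega
  | succ k ih =>
    intro A B C X Y h1 h2 h3 h4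
    obtain ⟨j, hj⟩ : ∃ j, j = (2 * B + A) / (2 * A) := ⟨_, rfl⟩
    have e1 := Int.emod_add_mul_ediv (2 * B + A) (2 * A)
    have e2 := Int.emod_nonneg (2 * B + A) (b := 2 * A) (by omega)
    have e3 := Int.emod_lt_of_pos (2 * B + A) (b := 2 * A) (by omega)
    rw [← hj] at e1
    have h3' : A * (C - 2 * j * B + j ^ 2 * A) - (B - j * A) ^ 2 = n := by rw [← h3]; ring
    have h4' : p = A * (X + j * Y) ^ 2 + 2 * (B - j * A) * (X + j * Y) * Y
        + (C - 2 * j * B + j ^ 2 * A) * Y ^ 2 := by rw [h4]; ring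
    by_cases hc : A ≤ C - 2 * j * B + j ^ 2 * A
    · exact ⟨A, B - j * A, C - 2 * j * B + j ^ 2 * A, X + j * Y, Y, h1, by nlinarith, by nlinarith,
        hc, h3', h4'⟩
    · push Not at hc
      refine ih (C - 2 * j * B + j ^ 2 * A) (B - j * A) A Y (X + j * Y) ?_ ?_ ?_ ?_
      · by_contra hneg
        push Not at hneg
        nlinarith [sq_nonneg (B - j * A)]
      · push_cast at h2; omega
      · rw [← h3']; ring
      · rw [h4']; ring

lemma start_form (n : ℤ) (p : ℕ) [Fact p.Prime] (hn : 0 < n) (h : IsSquare ((-n : ℤ) : ZMod p)) :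
    ∃ A B C X Y : ℤ, 0 < A ∧ -A ≤ 2 * B ∧ 2 * B ≤ A ∧ A ≤ C ∧ A * C - B ^ 2 = n ∧
      (p : ℤ) = A * X ^ 2 + 2 * B * X * Y + C * Y ^ 2 := by
  obtain ⟨t, ht⟩ := h
  obtain ⟨s, rfl⟩ := ZMod.intCast_surjective t
  have hd : (p : ℤ) ∣ s ^ 2 + n := by
    rw [← ZMod.intCast_zmod_eq_zero_iff_dvd]
    push_cast at ht ⊢
    linear_combination -ht
  obtain ⟨C, hC⟩ := hd
  have hp : 0 < p := (Fact.out : p.Prime).pos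
  exact reduce_form n p hn p p s C 1 0 (by exact_mod_cast hp) le_rfl (by linarith) (by ring)

lemma sq_two_dvd (q : ℕ) (hq : q.Prime) (h : q % 8 = 3 ∨ q % 8 = 5) (B Y : ℤ)
    (hd : (q : ℤ) ∣ B ^ 2 - 2 * Y ^ 2) : (q : ℤ) ∣ B ∧ (q : ℤ) ∣ Y := by
  haveI := Fact.mk hq
  have hY : (q : ℤ) ∣ Y := by
    by_contra hY
    have h2 : IsSquare (2 : ZMod q) := by
      rw [← ZMod.intCast_zmod_eq_zero_iff_dvd] at hd hY
      push_cast at hd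
      refine ⟨(B : ZMod q) / Y, ?_⟩
      field_simp
      linear_combination -hd
    rw [ZMod.exists_sq_eq_two_iff (by omega)] at h2
    omega
  refine ⟨?_, hY⟩
  have : (q : ℤ) ∣ B ^ 2 := by
    have h3 : (q : ℤ) ∣ 2 * Y ^ 2 := Dvd.dvd.mul_left (dvd_pow hY (by norm_num)) _
    simpa using dvd_add hd h3
  exact (Nat.prime_iff_prime_int.mp hq).dvd_of_dvd_pow this

lemma mul_mod8 (a b : ℤ) (ha : a % 8 = 1 ∨ a % 8 = 7) (hb : b % 8 = 1 ∨ b % 8 = 7) :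
    (a * b) % 8 = 1 ∨ (a * b) % 8 = 7 := by
  rw [Int.mul_emod]
  rcases ha with ha | ha <;> rcases hb with hb | hb <;> rw [ha, hb] <;> norm_num

lemma key_s2 (k : ℕ) : ∀ m n B Y : ℤ, m.natAbs ≤ k → m % 2 = 1 → m * n = 7 * (B ^ 2 - 2 * Y ^ 2) →
    (∀ q : ℕ, q.Prime → (q % 8 = 3 ∨ q % 8 = 5) → (q : ℤ) ∣ m → ¬ (q : ℤ) ∣ n) →
    m % 8 = 1 ∨ m % 8 = 7 := by
  induction k with
  | zero => intro m n B Y h1 h2; omega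
  | succ k ih =>
    intro m n B Y h1 h2 h3 h4
    by_cases hm : m.natAbs = 1
    · omega
    obtain ⟨q, hq, hqm⟩ := Nat.exists_prime_and_dvd hm
    have hqm' : (q : ℤ) ∣ m := Int.natCast_dvd.mpr hqm
    have hq2 := hq.two_le
    have hqi := Nat.prime_iff_prime_int.mp hq
    have hqodd : q % 2 = 1 := by
      rcases hq.eq_two_or_odd with h | h
      · subst h; omega
      · exact h
    by_cases hq8 : q % 8 = 3 ∨ q % 8 = 5
    · have hqn := h4 q hq hq8 hqm'
      have hd : (q : ℤ) ∣ 7 * (B ^ 2 - 2 * Y ^ 2) := h3 ▸ Dvd.dvd.mul_right hqm' n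
      have hd2 : (q : ℤ) ∣ B ^ 2 - 2 * Y ^ 2 := by
        rcases hqi.dvd_or_dvd hd with h | h
        · have : q ∣ 7 := by exact_mod_cast h
          rw [Nat.prime_dvd_prime_iff_eq hq (by norm_num)] at this
          omega
        · exact h
      obtain ⟨⟨B', rfl⟩, ⟨Y', rfl⟩⟩ := sq_two_dvd q hq hq8 B Y hd2
      have hq2m : (q : ℤ) ^ 2 ∣ m := by
        have : (q : ℤ) ^ 2 ∣ m * n := ⟨7 * (B' ^ 2 - 2 * Y' ^ 2), by rw [h3]; ring⟩
        exact hqi.pow_dvd_of_dvd_mul_right 2 hqn this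
      obtain ⟨m', rfl⟩ := hq2m
      have hq0 : (q : ℤ) ≠ 0 := by exact_mod_cast hq.ne_zero
      have hm0 : m' ≠ 0 := by rintro rfl; simp at h2
      have r := ih m' n B' Y' ?_ ?_ ?_ ?_
      · refine mul_mod8 _ _ (Or.inl ?_) r
        have : (q : ℤ) % 8 = 3 ∨ (q : ℤ) % 8 = 5 := by omega
        rw [pow_two, Int.mul_emod]
        rcases this with h | h <;> rw [h] <;> norm_num
      · rw [Int.natAbs_mul, Int.natAbs_pow, Int.natAbs_natCast] at h1
        have : 0 < m'.natAbs := Int.natAbs_pos.mpr hm0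
        have h4q : 4 ≤ q ^ 2 := by nlinarith
        have := Nat.mul_le_mul_right m'.natAbs h4q
        omega
      · rcases Int.emod_two_eq_zero_or_one m' with h | h
        · rw [Int.mul_emod, h] at h2; simp at h2
        · exact h
      · apply mul_left_cancel₀ (pow_ne_zero 2 hq0)
        linear_combination h3
      · intro r hr hr8 hrm
        exact h4 r hr hr8 (Dvd.dvd.mul_left hrm _)
    · obtain ⟨m', rfl⟩ := hqm'
      have hm0 : m' ≠ 0 := by rintro rfl; simp at h2
      have r := ih m' (q * n) B Y ?_ ?_ ?_ ?_
      · refine mul_mod8 _ _ (by omega) r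
      · rw [Int.natAbs_mul, Int.natAbs_natCast] at h1
        have : 0 < m'.natAbs := Int.natAbs_pos.mpr hm0
        nlinarith
      · rcases Int.emod_two_eq_zero_or_one m' with h | h
        · rw [Int.mul_emod, h] at h2; simp at h2
        · exact h
      · linear_combination h3
      · intro r hr hr8 hrm hrn
        rcases (Nat.prime_iff_prime_int.mp hr).dvd_or_dvd hrn with h | h
        · have : r ∣ q := by exact_mod_cast h
          rw [Nat.prime_dvd_prime_iff_eq hr hq] at this
          subst this
          exact hq8 hr8
        · exact h4 r hr hr8 (Dvd.dvd.mul_left hrm _) h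

lemma not_sq_dvd (p q : ℕ) (hp : p.Prime) (hq : q.Prime) (h : (q : ℤ) ^ 2 ∣ p) : False := by
  have h' : q ^ 2 ∣ p := by exact_mod_cast h
  have h1 : q = p := (Nat.prime_dvd_prime_iff_eq hq hp).mp ((dvd_pow_self q (by norm_num)).trans h')
  subst h1
  have := Nat.le_of_dvd hp.pos h'
  nlinarith [hq.two_le]

lemma odd_of (p a k : ℤ) (hp : p % 2 = 1) (h : p = a ^ 2 + 2 * k) : a % 2 = 1 := by
  rcases Int.emod_two_eq_zero_or_one a with h' | h'
  · obtain ⟨d, rfl⟩ : (2 : ℤ) ∣ a := Int.dvd_of_emod_eq_zero h'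
    ring_nf at h
    omega
  · exact h'

lemma odd_sq8 (a : ℤ) (h : a % 2 = 1) : a ^ 2 % 8 = 1 := by
  have : a % 8 = 1 ∨ a % 8 = 3 ∨ a % 8 = 5 ∨ a % 8 = 7 := by omega
  rw [pow_two, Int.mul_emod]
  rcases this with h | h | h | h <;> rw [h] <;> norm_num

lemma caseA' (p : ℕ) (hp : p.Prime) (a c x z : ℤ)
    (h1 : (p : ℤ) = a ^ 2 + 112 * c ^ 2) (h2 : (p : ℤ) = x ^ 2 + 56 * z ^ 2)
    (m n : ℤ) (hm : x + a = 2 * m) (hm1 : m % 2 = 1) (hn : x - a = 4 * n) :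
    (a - 4 * c) % 8 = 1 ∨ (a - 4 * c) % 8 = 7 := by
  have e : m * n = 7 * ((2 * c) ^ 2 - 2 * c ^ 2 - z ^ 2) := by
    have : (2 * m) * (4 * n) = 8 * (7 * ((2 * c) ^ 2 - 2 * c ^ 2 - z ^ 2)) := by
      rw [← hm, ← hn]; linear_combination h1 - h2
    linarith
  have hmm := key_s2 m.natAbs m (-n) z c le_rfl hm1 (by linear_combination -e) (by
    intro q hq hq8 hqm hqn
    rw [dvd_neg] at hqn
    have hd : (q : ℤ) ∣ 7 * (z ^ 2 - 2 * c ^ 2) := by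
      have := Dvd.dvd.mul_right hqm (-n)
      have e' : m * (-n) = 7 * (z ^ 2 - 2 * c ^ 2) := by linear_combination -e
      rwa [e'] at this
    have hqi := Nat.prime_iff_prime_int.mp hq
    have hd2 : (q : ℤ) ∣ z ^ 2 - 2 * c ^ 2 := by
      rcases hqi.dvd_or_dvd hd with h | h
      · have : q ∣ 7 := by exact_mod_cast h
        rw [Nat.prime_dvd_prime_iff_eq hq (by norm_num)] at this
        omega
      · exact h
    obtain ⟨⟨z', hz⟩, -⟩ := sq_two_dvd q hq hq8 z c hd2
    obtain ⟨m', hm'⟩ := hqm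
    obtain ⟨n', hn'⟩ := hqn
    have hx : x = q * (m' + 2 * n') := by
      have : x = m + 2 * n := by omega
      rw [this, hm', hn']; ring
    refine not_sq_dvd p q hp hq ⟨(m' + 2 * n') ^ 2 + 56 * z' ^ 2, ?_⟩
    rw [h2, hx, hz]; ring)
  have e2 : m * (a - 4 * c) = m ^ 2 - 4 * c * m - 28 * c ^ 2 + 14 * z ^ 2 := by
    have : a = m - 2 * n := by omega
    rw [this]; linear_combination -2 * e
  have hprod : (m * (a - 4 * c)) % 8 = 1 ∨ (m * (a - 4 * c)) % 8 = 7 := by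
    rw [e2]
    have hs := odd_sq8 m hm1
    obtain ⟨w, hw⟩ : ∃ w, m = 2 * w + 1 := ⟨m / 2, by omega⟩
    have e3 : 4 * c * m = 8 * (c * w) + 4 * c := by rw [hw]; ring
    have e4 : (c ^ 2 + c) % 2 = 0 := by
      have := Int.even_mul_succ_self c
      rw [← Int.even_iff]
      convert this using 1; ring
    rcases Int.emod_two_eq_zero_or_one z with h | h
    · obtain ⟨d, hd⟩ : (2 : ℤ) ∣ z := Int.dvd_of_emod_eq_zero h
      have : z ^ 2 = 4 * d ^ 2 := by rw [hd]; ring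
      omega
    · have := odd_sq8 z h
      omega
  have h3 := mul_mod8 _ _ hmm hprod
  have e5 : m * (m * (a - 4 * c)) = m ^ 2 * (a - 4 * c) := by ring
  rw [e5, Int.mul_emod, odd_sq8 m hm1] at h3
  omega

lemma caseA (p : ℕ) (hp : p.Prime) (hp8 : p % 8 = 1) (a c x y : ℤ)
    (h1 : (p : ℤ) = a ^ 2 + 112 * c ^ 2) (h2 : (p : ℤ) = x ^ 2 + 14 * y ^ 2) :
    (a - 4 * c) % 8 = 1 ∨ (a - 4 * c) % 8 = 7 := by
  have ha : a % 2 = 1 := odd_of p a (56 * c ^ 2) (by omega) (by linarith)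
  have hx : x % 2 = 1 := odd_of p x (7 * y ^ 2) (by omega) (by linarith)
  have hy : y % 2 = 0 := by
    by_contra hy
    have := odd_sq8 y (by omega)
    have := odd_sq8 x hx
    omega
  obtain ⟨z, rfl⟩ : (2 : ℤ) ∣ y := Int.dvd_of_emod_eq_zero hy
  by_cases h4 : (x + a) % 4 = 2
  · exact caseA' p hp a c x z h1 (by linarith) ((x + a) / 2) ((x - a) / 4) (by omega) (by omega)
      (by omega)
  · have := caseA' p hp (-a) c x z (by linarith) (by linarith) ((x - a) / 2) ((x + a) / 4)
      (by omega) (by omega) (by omega)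
    omega

lemma caseB (p : ℕ) (hp : p.Prime) (hp8 : p % 8 = 1) (a c x y : ℤ)
    (h1 : (p : ℤ) = a ^ 2 + 112 * c ^ 2) (h2 : (p : ℤ) = 2 * x ^ 2 + 7 * y ^ 2) :
    ¬ ((a - 4 * c) % 8 = 1 ∨ (a - 4 * c) % 8 = 7) := by
  have ha : a % 2 = 1 := odd_of p a (56 * c ^ 2) (by omega) (by linarith)
  have hy : y % 2 = 1 := odd_of p y (x ^ 2 + 3 * y ^ 2) (by omega) (by linarith)
  have hx : x % 2 = 1 := by
    by_contra hx
    obtain ⟨d, hd⟩ : (2 : ℤ) ∣ x := Int.dvd_of_emod_eq_zero (by omega)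
    have : x ^ 2 = 4 * d ^ 2 := by rw [hd]; ring
    have := odd_sq8 y hy
    omega
  have e : (4 * x + (a - 28 * c)) * (4 * x - (a - 28 * c))
      = 7 * ((a + 4 * c) ^ 2 - 2 * (2 * y) ^ 2) := by
    linear_combination 8 * h1 - 8 * h2
  have hmm := key_s2 _ _ _ _ _ le_rfl (by omega) e (by
    intro q hq hq8 hqm hqn
    have hqi := Nat.prime_iff_prime_int.mp hq
    have hd : (q : ℤ) ∣ 7 * ((a + 4 * c) ^ 2 - 2 * (2 * y) ^ 2) := e ▸ Dvd.dvd.mul_right hqm _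
    have hd2 : (q : ℤ) ∣ ((a + 4 * c) ^ 2 - 2 * (2 * y) ^ 2) := by
      rcases hqi.dvd_or_dvd hd with h | h
      · have : q ∣ 7 := by exact_mod_cast h
        rw [Nat.prime_dvd_prime_iff_eq hq (by norm_num)] at this
        omega
      · exact h
    have h2q : ¬ (q : ℤ) ∣ 2 := by
      intro h
      have : q ∣ 2 := by exact_mod_cast h
      rw [Nat.prime_dvd_prime_iff_eq hq (by norm_num)] at this
      omega
    obtain ⟨-, hy2⟩ := sq_two_dvd q hq hq8 _ _ hd2
    obtain ⟨y', hy'⟩ := (hqi.dvd_or_dvd hy2).resolve_left h2q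
    have hs := dvd_add hqm hqn
    have hx8 : (q : ℤ) ∣ 2 ^ 3 * x := by
      have e' : 4 * x + (a - 28 * c) + (4 * x - (a - 28 * c)) = 2 ^ 3 * x := by ring
      rwa [e'] at hs
    obtain ⟨x', hx'⟩ := (hqi.dvd_or_dvd hx8).resolve_left (fun h => h2q (hqi.dvd_of_dvd_pow h))
    refine not_sq_dvd p q hp hq ⟨2 * x' ^ 2 + 7 * y' ^ 2, ?_⟩
    rw [h2, hx', hy']; ring)
  omega

lemma isSquare_neg_seven (p : ℕ) [Fact p.Prime] (hp8 : p % 8 = 1)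
    (h7 : p % 7 = 1 ∨ p % 7 = 2 ∨ p % 7 = 4) :
    IsSquare (7 : ZMod p) := by
  haveI : Fact (Nat.Prime 7) := ⟨by norm_num⟩
  have h := ZMod.exists_sq_eq_prime_iff_of_mod_four_eq_one (p := p) (q := 7) (by omega) (by norm_num)
  have h' : IsSquare (p : ZMod 7) := by
    rw [← ZMod.natCast_mod]
    rcases h7 with h | h | h <;> rw [h]
    · exact ⟨1, rfl⟩
    · exact ⟨3, rfl⟩
    · exact ⟨2, rfl⟩
  exact_mod_cast h.mpr h'

lemma isSquare_neg_one' (p : ℕ) [Fact p.Prime] (hp8 : p % 8 = 1) : IsSquare (-1 : ZMod p) :=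
  ZMod.exists_sq_eq_neg_one_iff.mpr (by omega)

lemma rep7 (p : ℕ) [Fact p.Prime] (hp8 : p % 8 = 1)
    (h7 : p % 7 = 1 ∨ p % 7 = 2 ∨ p % 7 = 4) :
    ∃ a c : ℤ, (p : ℤ) = a ^ 2 + 112 * c ^ 2 := by
  have hsq : IsSquare ((-7 : ℤ) : ZMod p) := by
    have := (isSquare_neg_one' p hp8).mul (isSquare_neg_seven p hp8 h7)
    simpa using this
  obtain ⟨A, B, C, X, Y, hA, hB1, hB2, hC, hD, hp⟩ := start_form 7 p (by norm_num) hsq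
  have hA4 : A < 4 := by nlinarith
  obtain ⟨a, b, hab⟩ : ∃ a b : ℤ, (p : ℤ) = a ^ 2 + 7 * b ^ 2 := by
    have hB4 : B < 4 := by omega
    have hB4' : -4 < B := by omega
    interval_cases A <;> interval_cases B <;> try omega
    · exact ⟨X, Y, by rw [hp]; have : C = 7 := by omega
                      rw [this]; ring⟩
    all_goals
      exfalso
      have hC4 : C = 4 := by omega
      subst hC4
      ring_nf at hp
      omega
  have hb : b % 2 = 0 := by
    by_contra hb
    have hb8 := odd_sq8 b (by omega)
    rcases Int.emod_two_eq_zero_or_one a with h | h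
    · obtain ⟨d, hd⟩ : (2 : ℤ) ∣ a := Int.dvd_of_emod_eq_zero h
      have : a ^ 2 = 4 * d ^ 2 := by rw [hd]; ring
      omega
    · have := odd_sq8 a h
      omega
  obtain ⟨d, rfl⟩ : (2 : ℤ) ∣ b := Int.dvd_of_emod_eq_zero hb
  have ha : a % 2 = 1 := odd_of p a (14 * d ^ 2) (by omega) (by linarith)
  have ha8 := odd_sq8 a ha
  have hd : d % 2 = 0 := by
    by_contra hd
    have hb8 := odd_sq8 d (by omega)
    ring_nf at hab hb8 ha8
    omega
  obtain ⟨c, rfl⟩ : (2 : ℤ) ∣ d := Int.dvd_of_emod_eq_zero hd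
  exact ⟨a, c, by rw [hab]; ring⟩

lemma rep14 (p : ℕ) [Fact p.Prime] (hp8 : p % 8 = 1)
    (h7 : p % 7 = 1 ∨ p % 7 = 2 ∨ p % 7 = 4) :
    (∃ x y : ℤ, (p : ℤ) = x ^ 2 + 14 * y ^ 2) ∨ (∃ x y : ℤ, (p : ℤ) = 2 * x ^ 2 + 7 * y ^ 2) := by
  have hsq : IsSquare ((-14 : ℤ) : ZMod p) := by
    have h2 : IsSquare (2 : ZMod p) := (ZMod.exists_sq_eq_two_iff (by omega)).mpr (by omega)
    have := ((isSquare_neg_one' p hp8).mul (isSquare_neg_seven p hp8 h7)).mul h2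
    have e' : ((-14 : ℤ) : ZMod p) = -1 * 7 * 2 := by push_cast; norm_num
    rwa [e']
  obtain ⟨A, B, C, X, Y, hA, hB1, hB2, hC, hD, hp⟩ := start_form 14 p (by norm_num) hsq
  have hA4 : A < 5 := by nlinarith
  have hB4 : B < 5 := by omega
  have hB4' : -5 < B := by omega
  have sq7 : ∀ w : ℤ, w ^ 2 % 7 = 0 ∨ w ^ 2 % 7 = 1 ∨ w ^ 2 % 7 = 2 ∨ w ^ 2 % 7 = 4 := by
    intro w
    have : w % 7 = 0 ∨ w % 7 = 1 ∨ w % 7 = 2 ∨ w % 7 = 3 ∨ w % 7 = 4 ∨ w % 7 = 5 ∨ w % 7 = 6 := by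
      omega
    rw [pow_two, Int.mul_emod]
    rcases this with h | h | h | h | h | h | h <;> rw [h] <;> norm_num
  interval_cases A <;> interval_cases B <;> try omega
  · exact Or.inl ⟨X, Y, by rw [hp]; have : C = 14 := by omega
                           rw [this]; ring⟩
  · exact Or.inr ⟨X, Y, by rw [hp]; have : C = 7 := by omega
                           rw [this]; ring⟩
  · exfalso
    have hC5 : C = 5 := by omega
    subst hC5
    have e : 3 * (p : ℤ) = (3 * X - Y) ^ 2 + 14 * Y ^ 2 := by rw [hp]; ring
    have := sq7 (3 * X - Y)
    omega
  · exfalso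
    have hC5 : C = 5 := by omega
    subst hC5
    have e : 3 * (p : ℤ) = (3 * X + Y) ^ 2 + 14 * Y ^ 2 := by rw [hp]; ring
    have := sq7 (3 * X + Y)
    omega

lemma main_iff (p : ℕ) (hp : p.Prime) (hp8 : p % 8 = 1)
    (h7 : p % 7 = 1 ∨ p % 7 = 2 ∨ p % 7 = 4) (a c : ℤ)
    (h1 : (p : ℤ) = a ^ 2 + 112 * c ^ 2) :
    (∃ x y : ℤ, (p : ℤ) = x ^ 2 + 14 * y ^ 2) ↔ ((a - 4 * c) % 8 = 1 ∨ (a - 4 * c) % 8 = 7) := by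
  haveI := Fact.mk hp
  constructor
  · rintro ⟨x, y, h⟩
    exact caseA p hp hp8 a c x y h1 h
  · intro h
    rcases rep14 p hp8 h7 with h' | ⟨x, y, h'⟩
    · exact h'
    · exact absurd h (caseB p hp hp8 a c x y h1 h')

lemma sq16 (p a k : ℤ) (hp : p % 8 = 1) (h : p = a ^ 2 + 16 * k) :
    ((a % 8 = 1 ∨ a % 8 = 7) ∧ p % 16 = 1) ∨ ((a % 8 = 3 ∨ a % 8 = 5) ∧ p % 16 = 9) := by
  have ha : a % 2 = 1 := odd_of p a (8 * k) (by omega) (by linarith)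
  obtain ⟨d, r, hr, hd⟩ : ∃ d r : ℤ, (r = 1 ∨ r = 3 ∨ r = 5 ∨ r = 7) ∧ a = 8 * d + r :=
    ⟨a / 8, a % 8, by omega, by omega⟩
  have e : a ^ 2 = 16 * (4 * d ^ 2 + d * r) + r ^ 2 := by rw [hd]; ring
  rw [e] at h
  rcases hr with rfl | rfl | rfl | rfl <;> omega

lemma final (p : ℕ) (hp : p.Prime) (hp8 : p % 8 = 1)
    (h7 : p % 7 = 1 ∨ p % 7 = 2 ∨ p % 7 = 4) :
    (p % 16 = 1 → ((∃ x y : ℤ, (p : ℤ) = x ^ 2 + 14 * y ^ 2) ↔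
      (∃ x y : ℤ, (p : ℤ) = x ^ 2 + 448 * y ^ 2))) ∧
    (p % 16 = 9 → ((∃ x y : ℤ, (p : ℤ) = x ^ 2 + 14 * y ^ 2) ↔
      ¬ (∃ x y : ℤ, (p : ℤ) = x ^ 2 + 448 * y ^ 2))) := by
  haveI := Fact.mk hp
  by_cases h : ∃ x y : ℤ, (p : ℤ) = x ^ 2 + 448 * y ^ 2
  · simp only [h, iff_true, not_true, iff_false]
    obtain ⟨x, y, h⟩ := h
    rw [main_iff p hp hp8 h7 x (2 * y) (by rw [h]; ring)]
    have := sq16 p x (28 * y ^ 2) (by omega) (by linarith)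
    omega
  · simp only [h, not_false_iff, iff_true, iff_false]
    obtain ⟨a, c, hac⟩ := rep7 p hp8 h7
    have hc : c % 2 = 1 := by
      by_contra hc
      obtain ⟨d, rfl⟩ : (2 : ℤ) ∣ c := Int.dvd_of_emod_eq_zero (by omega)
      exact h ⟨a, d, by rw [hac]; ring⟩
    rw [main_iff p hp hp8 h7 a c hac]
    have := sq16 p a (7 * c ^ 2) (by omega) (by linarith)
    omega

theorem kaplansky_like_2 (p : ℕ) (hp : p.Prime) :
    ((p % 112 = 1 ∨ p % 112 = 65 ∨ p % 112 = 81) → ((∃ x y : ℤ, (p : ℤ) = x ^ 2 + 14 * y ^ 2) ↔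
      (∃ x y : ℤ, (p : ℤ) = x ^ 2 + 448 * y ^ 2))) ∧
    ((p % 112 = 9 ∨ p % 112 = 25 ∨ p % 112 = 57) → Xor' (∃ x y : ℤ, (p : ℤ) = x ^ 2 + 14 * y ^ 2)
      (∃ x y : ℤ, (p : ℤ) = x ^ 2 + 448 * y ^ 2)) := by
  constructor
  · intro h
    exact (final p hp (by omega) (by omega)).1 (by omega)
  · intro h
    have hf := (final p hp (by omega) (by omega)).2 (by omega)
    by_cases h4 : ∃ x y : ℤ, (p : ℤ) = x ^ 2 + 448 * y ^ 2
    · exact Or.inr ⟨h4, fun h5 => hf.mp h5 h4⟩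
    · exact Or.inl ⟨hf.mpr h4, h4⟩
end

section
/- Let p be a prime with p ≡ 1 or 169 (mod 240). Then p is representable by x²+150y² if and only if p is representable by x²+960y². Let p be a prime with p ≡ 49 or 121 (mod 240). Then p is representable by exactly one of the quadratic forms x²+150y² and x²+960y². -/
open scoped NumberTheorySymbols

/-- Thue's lemma with weights. -/
lemma kl_thue (p : ℕ) (hp : p.Prime) (s : ℤ) (m : ℕ) (hm : 0 < m) :
    ∃ x y : ℤ, (x ≠ 0 ∨ y ≠ 0) ∧ x ^ 2 ≤ m * p ∧ m * y ^ 2 ≤ p ∧ (p : ℤ) ∣ x - s * y := by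
  have : NeZero p := ⟨hp.ne_zero⟩
  set X := Nat.sqrt (m * p) with hX
  set Y := Nat.sqrt (p / m) with hY
  have h1 : m * p < (X + 1) * (X + 1) := Nat.lt_succ_sqrt _
  have h2 : p / m < (Y + 1) * (Y + 1) := Nat.lt_succ_sqrt _
  have h1' : X * X ≤ m * p := Nat.sqrt_le _
  have h2' : Y * Y ≤ p / m := Nat.sqrt_le _
  have h3 : p < m * ((Y + 1) * (Y + 1)) := by
    have := (Nat.div_lt_iff_lt_mul hm).1 h2
    linarith
  have h4 : m * (Y * Y) ≤ p := by
    calc m * (Y * Y) ≤ m * (p / m) := Nat.mul_le_mul_left _ h2'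
      _ ≤ p := Nat.mul_div_le _ _
  have h5 : p < (X + 1) * (Y + 1) := by
    by_contra hcon
    push Not at hcon
    have hpp : 0 < p := hp.pos
    have e1 : (m * p) * p < ((X + 1) * (X + 1)) * (m * ((Y + 1) * (Y + 1))) :=
      Nat.mul_lt_mul_of_lt_of_le h1 h3.le (by positivity)
    have e2 : ((X + 1) * (Y + 1)) * ((X + 1) * (Y + 1)) ≤ p * p := Nat.mul_le_mul hcon hcon
    nlinarith
  obtain ⟨⟨i, j⟩, hij, ⟨k, l⟩, hkl, hne, heq⟩ :=
    Finset.exists_ne_map_eq_of_card_lt_of_maps_to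
      (s := Finset.range (X + 1) ×ˢ Finset.range (Y + 1)) (t := (Finset.univ : Finset (ZMod p)))
      (f := fun q => (q.1 : ZMod p) - (s : ZMod p) * (q.2 : ZMod p))
      (by simpa [ZMod.card] using h5) (by intro q _; simp)
  simp only [Finset.mem_product, Finset.mem_range] at hij hkl heq
  refine ⟨(i : ℤ) - k, (j : ℤ) - l, ?_, ?_, ?_, ?_⟩
  · by_contra hcon
    push Not at hcon
    apply hne
    ext <;> simp <;> omega
  · have : |(i : ℤ) - k| ≤ X := by rw [abs_le]; omega
    have h6 : ((i : ℤ) - k) ^ 2 ≤ (X : ℤ) ^ 2 := sq_le_sq' (by linarith [(abs_le.1 this).1]) (abs_le.1 this).2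
    have h7 : ((X * X : ℕ) : ℤ) ≤ ((m * p : ℕ) : ℤ) := by exact_mod_cast h1'
    push_cast at h7
    nlinarith
  · have : |(j : ℤ) - l| ≤ Y := by rw [abs_le]; omega
    have h6 : ((j : ℤ) - l) ^ 2 ≤ (Y : ℤ) ^ 2 := sq_le_sq' (by linarith [(abs_le.1 this).1]) (abs_le.1 this).2
    have h7 : ((m * (Y * Y) : ℕ) : ℤ) ≤ ((p : ℕ) : ℤ) := by exact_mod_cast h4
    push_cast at h7
    have hm' : (0 : ℤ) < m := by exact_mod_cast hm
    nlinarith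
  · rw [← ZMod.intCast_zmod_eq_zero_iff_dvd]
    push_cast
    linear_combination heq

/-- Small multiples of `p` represented by `x ^ 2 - n * y ^ 2`. -/
lemma kl_thue' (p : ℕ) (hp : p.Prime) (n : ℤ) (hn : J(n | p) = 1) (m : ℕ) (hm : 0 < m) :
    ∃ x y k : ℤ, (x ≠ 0 ∨ y ≠ 0) ∧ x ^ 2 ≤ m * p ∧ m * y ^ 2 ≤ p ∧ x ^ 2 - n * y ^ 2 = p * k := by
  have : Fact p.Prime := ⟨hp⟩
  obtain ⟨r, hr⟩ := ZMod.isSquare_of_jacobiSym_eq_one hn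
  obtain ⟨s, rfl⟩ := ZMod.intCast_surjective r
  obtain ⟨x, y, h0, h1, h2, h3⟩ := kl_thue p hp s m hm
  have hs : (p : ℤ) ∣ s ^ 2 - n := by
    rw [← ZMod.intCast_zmod_eq_zero_iff_dvd]
    push_cast
    linear_combination -hr
  obtain ⟨k, hk⟩ : (p : ℤ) ∣ x ^ 2 - n * y ^ 2 := by
    have : x ^ 2 - n * y ^ 2 = (x - s * y) * (x + s * y) + (s ^ 2 - n) * y ^ 2 := by ring
    rw [this]
    exact dvd_add (Dvd.dvd.mul_right h3 _) (Dvd.dvd.mul_right hs _)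
  exact ⟨x, y, k, h0, h1, h2, hk⟩

lemma kl_sq3 (x : ℤ) : x ^ 2 % 3 = 0 ∧ x % 3 = 0 ∨ x ^ 2 % 3 = 1 := by
  have h : x % 3 = 0 ∨ x % 3 = 1 ∨ x % 3 = 2 := by omega
  rcases h with h | h | h <;> simp [pow_two, Int.mul_emod, h]

lemma kl_sq5 (x : ℤ) : x ^ 2 % 5 = 0 ∧ x % 5 = 0 ∨ x ^ 2 % 5 = 1 ∨ x ^ 2 % 5 = 4 := by
  have h : x % 5 = 0 ∨ x % 5 = 1 ∨ x % 5 = 2 ∨ x % 5 = 3 ∨ x % 5 = 4 := by omega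
  rcases h with h | h | h | h | h <;> simp [pow_two, Int.mul_emod, h]

lemma kl_sq16 (x : ℤ) : x ^ 2 % 16 = 0 ∧ x % 4 = 0 ∨ x ^ 2 % 16 = 4 ∧ x % 4 = 2 ∨
    x ^ 2 % 16 = 1 ∧ x % 2 = 1 ∨ x ^ 2 % 16 = 9 ∧ x % 2 = 1 := by
  have h0 : 0 ≤ x % 16 := by omega
  have h1 : x % 16 < 16 := by omega
  have e1 : x % 4 = x % 16 % 4 := by omega
  have e2 : x % 2 = x % 16 % 2 := by omega
  rw [e1, e2, pow_two, Int.mul_emod]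
  generalize x % 16 = z at *
  interval_cases z <;> simp

lemma kl_rep6 (p : ℕ) (hp : p.Prime) (h : p % 24 = 1) : ∃ u v : ℤ, (p : ℤ) = u ^ 2 + 6 * v ^ 2 := by
  have hJ : J(-6 | p) = 1 := by
    rw [jacobiSym.mod_right _ (by rw [Nat.odd_iff]; omega)]
    norm_num [h]
  obtain ⟨x, y, k, h0, h1, h2, hk⟩ := kl_thue' p hp (-6) hJ 2 (by norm_num)
  have hpp : (0 : ℤ) < p := by exact_mod_cast hp.pos
  have hpos : 0 < x ^ 2 + 6 * y ^ 2 := by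
    rcases h0 with h0 | h0 <;> positivity
  push_cast at h1 h2
  have k1 : 0 < k := by
    by_contra hc
    push Not at hc
    nlinarith
  have k2 : k ≤ 5 := by
    by_contra hc
    push Not at hc
    nlinarith
  have a1 := kl_sq3 x
  have a2 := kl_sq16 x
  have a3 := kl_sq16 y
  interval_cases k
  · exact ⟨x, y, by linarith⟩
  · omega
  · obtain ⟨x', hx⟩ : (3 : ℤ) ∣ x := by omega
    subst hx
    have := kl_sq3 y
    ring_nf at hk this
    omega
  · obtain ⟨x', hx⟩ : (2 : ℤ) ∣ x := by omega
    obtain ⟨y', hy⟩ : (2 : ℤ) ∣ y := by omega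
    subst hx hy
    exact ⟨x', y', by linarith⟩
  · omega

lemma kl_rep15 (p : ℕ) (hp : p.Prime) (h : p % 24 = 1) (h5 : p % 5 = 1 ∨ p % 5 = 4) :
    ∃ a b : ℤ, (p : ℤ) = a ^ 2 + 15 * b ^ 2 := by
  have hJ : J(-15 | p) = 1 := by
    rw [jacobiSym.mod_right _ (by rw [Nat.odd_iff]; omega)]
    have : p % (4 * (-15 : ℤ).natAbs) = 1 ∨ p % (4 * (-15 : ℤ).natAbs) = 49 := by
      norm_num
      omega
    rcases this with h | h <;> rw [h] <;> norm_num
  obtain ⟨x, y, k, h0, h1, h2, hk⟩ := kl_thue' p hp (-15) hJ 4 (by norm_num)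
  have hpp : (0 : ℤ) < p := by exact_mod_cast hp.pos
  have hpos : 0 < x ^ 2 + 15 * y ^ 2 := by
    rcases h0 with h0 | h0 <;> positivity
  push_cast at h1 h2
  have k1 : 0 < k := by
    by_contra hc
    push Not at hc
    nlinarith
  have k2 : k ≤ 7 := by
    by_contra hc
    push Not at hc
    nlinarith
  have a1 := kl_sq3 x
  have a4 := kl_sq5 x
  have hk' : k = 1 ∨ k = 4 ∨ k = 6 := by
    interval_cases k <;> omega
  clear a1 a4
  have a2 := kl_sq16 x
  have a3 := kl_sq16 y
  clear h0 h1 h2 hpos hJ h5 k1 k2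
  rcases hk' with rfl | rfl | rfl
  · exact ⟨x, y, by linarith⟩
  · obtain ⟨x', hx⟩ : (2 : ℤ) ∣ x := by omega
    obtain ⟨y', hy⟩ : (2 : ℤ) ∣ y := by omega
    subst hx hy
    exact ⟨x', y', by linarith⟩
  · omega

lemma kl_rep10 (p : ℕ) (hp : p.Prime) (h : p % 24 = 1) (h5 : p % 5 = 1 ∨ p % 5 = 4) :
    ∃ e f : ℤ, 0 < e ∧ 0 ≤ f ∧ (p : ℤ) = e ^ 2 - 10 * f ^ 2 := by
  have hJ : J(10 | p) = 1 := by
    rw [jacobiSym.mod_right _ (by rw [Nat.odd_iff]; omega)]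
    have : p % (4 * (10 : ℤ).natAbs) = 1 ∨ p % (4 * (10 : ℤ).natAbs) = 9 := by
      norm_num
      omega
    rcases this with h | h <;> rw [h] <;> norm_num
  suffices H : ∃ e f : ℤ, (p : ℤ) = e ^ 2 - 10 * f ^ 2 by
    obtain ⟨e, f, hef⟩ := H
    refine ⟨|e|, |f|, ?_, abs_nonneg _, by simpa using hef⟩
    rw [abs_pos]
    rintro rfl
    have : (0 : ℤ) < p := by exact_mod_cast hp.pos
    nlinarith [sq_nonneg f]
  obtain ⟨x, y, k, h0, h1, h2, hk⟩ := kl_thue' p hp 10 hJ 3 (by norm_num)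
  have hpp : (0 : ℤ) < p := by exact_mod_cast hp.pos
  push_cast at h1 h2
  have k1 : -4 < k := by
    by_contra hc
    push Not at hc
    nlinarith [sq_nonneg x]
  have k2 : k ≤ 3 := by
    by_contra hc
    push Not at hc
    nlinarith [sq_nonneg y]
  have a4 := kl_sq5 x
  have hk0 : k ≠ 0 := by
    rintro rfl
    have hxy : x ^ 2 = 10 * y ^ 2 := by linarith
    have hirr : ¬ IsSquare (10 : ℤ) := by
      rintro ⟨r, hr⟩
      have : r < 4 := by nlinarith
      have : -4 < r := by nlinarith
      interval_cases r <;> omega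
    by_cases hy : y = 0
    · subst hy
      have : x = 0 := by simpa using hxy
      tauto
    · have hd : y ^ 2 ∣ x ^ 2 := ⟨10, by linarith⟩
      rw [Int.pow_dvd_pow_iff (by norm_num)] at hd
      obtain ⟨r, rfl⟩ := hd
      apply hirr
      refine ⟨r, ?_⟩
      have : y ^ 2 ≠ 0 := by positivity
      apply mul_left_cancel₀ this
      linarith
  interval_cases k
  · omega
  · omega
  · exact ⟨3 * x + 10 * y, x + 3 * y, by linarith⟩
  · omega
  · exact ⟨x, y, by linarith⟩
  · omega
  · omega

lemma kl_gcd (x y : ℤ) (h : ∀ q : ℕ, q.Prime → (q : ℤ) ∣ x → (q : ℤ) ∣ y → False) :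
    Int.gcd x y = 1 := by
  by_contra hc
  obtain ⟨q, hq, hd⟩ := Nat.exists_prime_and_dvd hc
  have hd' : (q : ℤ) ∣ (Int.gcd x y : ℤ) := Int.natCast_dvd_natCast.2 hd
  exact h q hq (hd'.trans (Int.gcd_dvd_left ..)) (hd'.trans (Int.gcd_dvd_right ..))

lemma kl_nosq (p : ℕ) (hp : p.Prime) (x y k : ℤ) (h : (p : ℤ) = x ^ 2 + k * y ^ 2) (q : ℕ)
    (hq : q.Prime) (hx : (q : ℤ) ∣ x) (hy : (q : ℤ) ∣ y) : False := by
  have h1 : ((q * q : ℕ) : ℤ) ∣ p := by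
    obtain ⟨x', rfl⟩ := hx
    obtain ⟨y', rfl⟩ := hy
    exact ⟨x' ^ 2 + k * y' ^ 2, by rw [h]; push_cast; ring⟩
  have h2 : q * q ∣ p := Int.natCast_dvd_natCast.1 h1
  have h3 := hp.prime.squarefree q h2
  exact hq.one_lt.ne' (Nat.isUnit_iff.1 h3)

lemma kl_two (p : ℕ) (hp8 : p % 8 = 1) : J(2 | p) = 1 := by
  rw [jacobiSym.mod_right _ (by rw [Nat.odd_iff]; omega)]
  norm_num [hp8]

lemma kl_neg_one (p : ℕ) (hp8 : p % 8 = 1) : J(-1 | p) = 1 := by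
  have : p % 4 = 1 := by omega
  rw [jacobiSym.mod_right _ (by rw [Nat.odd_iff]; omega)]
  norm_num [this]

lemma kl_recip (p : ℕ) (hp8 : p % 8 = 1) (z : ℤ) (hz : z ≠ 0) :
    ∃ k y : ℕ, Odd y ∧ z.natAbs = 2 ^ k * y ∧ (y : ℤ) ∣ z ∧ J(z | p) = J(p | y) := by
  obtain ⟨k, y, hy, hky⟩ := Nat.exists_eq_two_pow_mul_odd (Int.natAbs_ne_zero.2 hz)
  refine ⟨k, y, hy, hky, ?_, ?_⟩
  · rw [Int.natCast_dvd, hky]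
    exact dvd_mul_left _ _
  · have h1 : J(((z.natAbs : ℕ) : ℤ) | p) = J(p | y) := by
      rw [hky]
      push_cast
      rw [jacobiSym.mul_left, jacobiSym.pow_left, kl_two p hp8, one_pow, one_mul]
      exact jacobiSym.quadratic_reciprocity_one_mod_four' hy (by omega)
    rcases Int.natAbs_eq z with h | h
    · rw [← h1, ← h]
    · rw [← h1, h, neg_eq_neg_one_mul, jacobiSym.mul_left, kl_neg_one p hp8, one_mul]
      simp

lemma kl_modeq (a b : ℤ) (n : ℕ) (h : (n : ℤ) ∣ a - b) : J(a | n) = J(b | n) :=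
  jacobiSym.mod_left' (Int.emod_emod_of_dvd a (dvd_refl (n : ℤ)) ▸
    (Int.emod_emod_of_dvd a (dvd_refl (n : ℤ))).symm ▸ (Int.ModEq.symm (Int.modEq_iff_dvd.2 h)))

lemma kl_symY (p : ℕ) (hp : p.Prime) (hp8 : p % 8 = 1) (x y k : ℤ)
    (h : (p : ℤ) = x ^ 2 + k * y ^ 2) (hy : y ≠ 0) : J(y | p) = 1 := by
  obtain ⟨_, w, _, _, hd, hJ⟩ := kl_recip p hp8 y hy
  rw [hJ, kl_modeq p (x ^ 2) w, jacobiSym.sq_one']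
  · exact kl_gcd _ _ fun q hq h1 h2 => kl_nosq p hp x y k h q hq h1 (h2.trans hd)
  · rw [h]
    exact hd.trans ⟨k * y, by ring⟩

lemma kl_ten (y : ℕ) (hy : Odd y) :
    ((y ^ 2 % 80 = 1 ∨ y ^ 2 % 80 = 9) → J(10 | y) = 1) ∧
    ((y ^ 2 % 80 = 41 ∨ y ^ 2 % 80 = 49) → J(10 | y) = -1) := by
  rw [jacobiSym.mod_right _ hy]
  have h80 : y ^ 2 % 80 = (y % 40) ^ 2 % 80 := by
    conv_lhs => rw [← Nat.mod_add_div y 40]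
    have : (y % 40 + 40 * (y / 40)) ^ 2
      = (y % 40) ^ 2 + 80 * ((y % 40) * (y / 40) + 20 * (y / 40) ^ 2) := by ring
    rw [this, Nat.add_mul_mod_self_left]
  have e : 4 * (10 : ℤ).natAbs = 40 := rfl
  rw [h80, e]
  have hlt : y % 40 < 40 := Nat.mod_lt _ (by norm_num)
  generalize y % 40 = r at *
  interval_cases r <;> norm_num

lemma kl_flip (y : ℕ) (hy : Odd y) : J(-15 | y) = J(y | 15) := by
  rw [jacobiSym.mod_right _ hy, jacobiSym.mod_left (y : ℤ)]
  have e : 4 * (-15 : ℤ).natAbs = 60 := rfl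
  have e2 : ((y : ℤ) % ((15 : ℕ) : ℤ)) = ((y % 60 : ℕ) : ℤ) % 15 := by push_cast; omega
  rw [e, e2]
  have hlt : y % 60 < 60 := Nat.mod_lt _ (by norm_num)
  have hodd : y % 60 % 2 = 1 := by rw [Nat.odd_iff] at hy; omega
  generalize y % 60 = r at *
  interval_cases r <;> first | omega | norm_num

lemma kl_key1 (p : ℕ) (hp : p.Prime) (hp8 : p % 8 = 1) (a c : ℤ)
    (h : (p : ℤ) = a ^ 2 + 240 * c ^ 2) :
    (((p + 40 * c) % 80 = 1 ∨ (p + 40 * c) % 80 = 9) → J(a + 20 * c | p) = 1) ∧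
    (((p + 40 * c) % 80 = 41 ∨ (p + 40 * c) % 80 = 49) → J(a + 20 * c | p) = -1) := by
  have ha : a % 2 = 1 := by
    have := kl_sq16 a
    omega
  obtain ⟨k, y, hy, hk, hd, hJ⟩ := kl_recip p hp8 (a + 20 * c) (by omega)
  have hk0 : k = 0 := by
    by_contra hk0
    obtain ⟨k', rfl⟩ := Nat.exists_eq_succ_of_ne_zero hk0
    rw [pow_succ] at hk
    have : (a + 20 * c).natAbs = 2 * (2 ^ k' * y) := by rw [hk]; ring
    omega
  subst hk0
  have hy2 : ((y ^ 2 : ℕ) : ℤ) = (a + 20 * c) ^ 2 := by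
    rw [← Int.natAbs_sq (a + 20 * c), hk]; push_cast; ring
  have hJ2 : J(a + 20 * c | p) = J(10 | y) := by
    rw [hJ, kl_modeq p (10 * (8 * c) ^ 2) y, jacobiSym.mul_left, jacobiSym.sq_one', mul_one]
    · refine kl_gcd _ _ fun q hq h1 h2 => ?_
      have hq' : Prime (q : ℤ) := Nat.prime_iff_prime_int.1 hq
      have h3 := h2.trans hd
      rcases hq'.dvd_or_dvd h1 with h1 | h1
      · have h8 : (q : ℤ) ∣ 2 := by
          have : (8 : ℤ) = 2 ^ 3 := by norm_num
          rw [this] at h1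
          exact hq'.dvd_of_dvd_pow h1
        have : q = 2 := (Nat.prime_dvd_prime_iff_eq hq Nat.prime_two).1 (by exact_mod_cast h8)
        subst this
        push_cast at h3
        omega
      · have h4 : (q : ℤ) ∣ a := (dvd_add_left (h1.mul_left 20)).1 h3
        exact kl_nosq p hp a c 240 h q hq h4 h1
    · rw [h]
      exact hd.trans ⟨a - 20 * c, by ring⟩
  obtain ⟨t, ht⟩ : ∃ t, a = 2 * t + 1 := ⟨a / 2, by omega⟩
  have hmod : ((y ^ 2 : ℕ) : ℤ) % 80 = (p + 40 * c) % 80 := by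
    rw [hy2, h]
    apply Int.ModEq.symm
    rw [Int.modEq_iff_dvd]
    exact ⟨c * t + 2 * c ^ 2, by subst ht; ring⟩
  rw [hJ2, ← hmod]
  have := kl_ten y hy
  constructor
  · intro h'; apply this.1; omega
  · intro h'; apply this.2; omega

lemma kl_two15 : J(2 | 15) = 1 := by norm_num

lemma kl_key2 (p : ℕ) (hp : p.Prime) (h24 : p % 24 = 1) (e f : ℤ) (he : 0 < e) (hf : 0 ≤ f)
    (h : (p : ℤ) = e ^ 2 - 10 * f ^ 2) : J(5 * f + 2 * e | p) = J(e | 15) := by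
  have h3 : (3 : ℤ) ∣ f := by
    have := kl_sq3 e
    have := kl_sq3 f
    omega
  obtain ⟨k, y, hy, hk, hd, hJ⟩ := kl_recip p (by omega) (5 * f + 2 * e) (by omega)
  have hodd : y % 2 = 1 := Nat.odd_iff.1 hy
  have hnot2 : ∀ q : ℕ, q.Prime → (q : ℤ) ∣ y → (q : ℤ) ∣ 2 → False := by
    intro q hq h1 h2
    have : q = 2 := (Nat.prime_dvd_prime_iff_eq hq Nat.prime_two).1 (by exact_mod_cast h2)
    subst this
    push_cast at h1
    omega
  have e1 : J(p | y) = J(2 ^ 2 * p | y) := by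
    rw [jacobiSym.mul_left, jacobiSym.sq_one', one_mul]
    exact kl_gcd _ _ fun q hq h1 h2 => hnot2 q hq h2 h1
  have e2 : J(2 ^ 2 * p | y) = J(-15 * f ^ 2 | y) := by
    apply kl_modeq
    rw [h]
    exact hd.trans ⟨2 * e - 5 * f, by ring⟩
  have e3 : J(-15 * f ^ 2 | y) = J(-15 | y) := by
    rw [jacobiSym.mul_left, jacobiSym.sq_one', mul_one]
    refine kl_gcd _ _ fun q hq h1 h2 => ?_
    have hq' : Prime (q : ℤ) := Nat.prime_iff_prime_int.1 hq
    have h4 : (q : ℤ) ∣ 2 * e := (dvd_add_right (h1.mul_left 5)).1 (h2.trans hd)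
    rcases hq'.dvd_or_dvd h4 with h4 | h4
    · exact hnot2 q hq h2 h4
    · exact kl_nosq p hp e f (-10) (by rw [h]; ring) q hq h4 h1
  have e4 : J(5 * f + 2 * e | 15) = J(y | 15) := by
    have : 5 * f + 2 * e = 2 ^ k * (y : ℤ) := by
      have : ((5 * f + 2 * e).natAbs : ℤ) = 5 * f + 2 * e := Int.natAbs_of_nonneg (by omega)
      rw [← this, hk]; push_cast; ring
    rw [this, jacobiSym.mul_left, jacobiSym.pow_left, kl_two15, one_pow, one_mul]
  have e5 : J(5 * f + 2 * e | 15) = J(2 * e | 15) := by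
    apply kl_modeq
    push_cast
    omega
  rw [hJ, e1, e2, e3, kl_flip y hy, ← e4, e5, jacobiSym.mul_left, kl_two15, one_mul]

lemma kl_M15 (M : ℕ) : ∀ N v f : ℤ, M.Coprime 15 →
    (∀ q : ℕ, q.Prime → q ≠ 2 → q ∣ M → (q : ℤ) ∣ N → (q : ℤ) ∣ v → False) →
    (M : ℤ) * N = 2 * (3 * v ^ 2 + 5 * f ^ 2) → M ≠ 0 → J(M | 15) = 1 := by
  induction M using Nat.strong_induction_on with
  | _ M ih =>
    intro N v f hc hq hMN hM
    by_cases h2 : 2 ∣ M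
    · obtain ⟨M', rfl⟩ := h2
      have := ih M' (by omega) (2 * N) v f (Nat.Coprime.coprime_mul_left hc) ?_ ?_ (by omega)
      · push_cast
        rw [jacobiSym.mul_left, kl_two15, one_mul, this]
      · intro q hq1 hq2 hq3 hq4 hq5
        rcases (Nat.prime_iff_prime_int.1 hq1).dvd_or_dvd hq4 with h | h
        · exact hq2 ((Nat.prime_dvd_prime_iff_eq hq1 Nat.prime_two).1 (by exact_mod_cast h))
        · exact hq q hq1 hq2 (hq3.mul_left 2) h hq5
      · rw [← hMN]; push_cast; ring
    have hodd : Odd M := by rw [Nat.odd_iff]; omega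
    by_cases hcom : ∃ q : ℕ, q.Prime ∧ q ∣ M ∧ (q : ℤ) ∣ v ∧ (q : ℤ) ∣ f
    · obtain ⟨q, hq1, hq2, ⟨v', rfl⟩, ⟨f', rfl⟩⟩ := hcom
      have hne2 : q ≠ 2 := by rintro rfl; exact h2 hq2
      have hqN := fun h => hq q hq1 hne2 hq2 h (dvd_mul_right _ _)
      have hsq : (q : ℤ) ^ 2 ∣ M := by
        have hcop : IsCoprime ((q : ℤ) ^ 2) N :=
          ((Nat.prime_iff_prime_int.1 hq1).coprime_iff_not_dvd.2 hqN).pow_left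
        apply hcop.dvd_of_dvd_mul_right
        rw [hMN]
        exact ⟨2 * (3 * v' ^ 2 + 5 * f' ^ 2), by ring⟩
      have hsq' : q ^ 2 ∣ M := by exact_mod_cast hsq
      obtain ⟨M', rfl⟩ := hsq'
      have hq0 : (q : ℤ) ≠ 0 := by exact_mod_cast hq1.ne_zero
      have hM' : M' ≠ 0 := by rintro rfl; simp at hM
      have hlt : M' < q ^ 2 * M' := by
        have := hq1.two_le
        have : 2 ≤ q ^ 2 := by nlinarith
        have : 0 < M' := by omega
        nlinarith
      have := ih M' hlt N v' f' (Nat.Coprime.coprime_mul_left hc)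
        (fun r hr1 hr2 hr3 hr4 hr5 => hq r hr1 hr2 (hr3.mul_left _) hr4 (hr5.mul_left _)) ?_ hM'
      · push_cast
        rw [jacobiSym.mul_left, this, mul_one, jacobiSym.sq_one']
        have : Nat.Coprime (q ^ 2) 15 := Nat.Coprime.coprime_mul_right hc
        exact Nat.Coprime.coprime_dvd_left (dvd_pow_self q two_ne_zero) this
      · apply mul_left_cancel₀ (pow_ne_zero 2 hq0)
        push_cast at hMN
        linear_combination hMN
    · push Not at hcom
      have hM2 : (M : ℤ) ∣ 3 * v ^ 2 + 5 * f ^ 2 := by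
        have h1 : (M : ℤ) ∣ 2 * (3 * v ^ 2 + 5 * f ^ 2) := ⟨N, hMN.symm⟩
        have h3 : IsCoprime (M : ℤ) 2 := by
          have : Nat.Coprime M 2 := Nat.coprime_two_right.2 hodd
          exact_mod_cast Nat.isCoprime_iff_coprime.2 this
        exact h3.dvd_of_dvd_mul_left h1
      have hfg : Int.gcd f M = 1 := by
        refine kl_gcd _ _ fun q hq1 h1 h3 => ?_
        have h3' : q ∣ M := by exact_mod_cast h3
        have hq' : Prime (q : ℤ) := Nat.prime_iff_prime_int.1 hq1
        have h4 : (q : ℤ) ∣ 3 * v ^ 2 :=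
          (dvd_add_left ((dvd_pow h1 two_ne_zero).mul_left 5)).1 (h3.trans hM2)
        rcases hq'.dvd_or_dvd h4 with h4 | h4
        · have : q = 3 := (Nat.prime_dvd_prime_iff_eq hq1 Nat.prime_three).1 (by exact_mod_cast h4)
          subst this
          have := Nat.Coprime.coprime_dvd_left h3' hc
          norm_num at this
        · exact hcom q hq1 h3' (hq'.dvd_of_dvd_pow h4) h1
      rw [← kl_flip M hodd]
      have e1 : J((3 * v) ^ 2 | M) = J(-15 * f ^ 2 | M) := by
        apply kl_modeq
        exact hM2.trans ⟨3, by ring⟩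
      rw [jacobiSym.mul_left, jacobiSym.sq_one' hfg, mul_one, jacobiSym.pow_left] at e1
      have e2 : J(-15 | M) ≠ 0 := by
        apply jacobiSym.ne_zero
        exact hc.symm
      rcases jacobiSym.trichotomy (-15) M with h | h | h
      · exact absurd h e2
      · exact h
      · rw [h] at e1
        nlinarith [sq_nonneg J(3 * v | M)]

lemma kl_core (p : ℕ) (hp : p.Prime) (e f u v : ℤ) (he : 0 < e)
    (h1 : (p : ℤ) = e ^ 2 - 10 * f ^ 2) (h2 : (p : ℤ) = u ^ 2 + 6 * v ^ 2)
    (h3 : ¬ (3 : ℤ) ∣ e + u) (h5 : ¬ (5 : ℤ) ∣ e + u) : J(e + u | 15) = 1 := by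
  have habs : |u| ≤ |e| := by
    rw [← sq_le_sq]
    nlinarith [sq_nonneg f, sq_nonneg v]
  rw [abs_of_pos he, abs_le] at habs
  obtain ⟨M, hM⟩ := Int.eq_ofNat_of_zero_le (show 0 ≤ e + u by omega)
  rw [hM] at h3 h5 ⊢
  have hM3 : ¬ 3 ∣ M := fun h => h3 (by exact_mod_cast h)
  have hM5 : ¬ 5 ∣ M := fun h => h5 (by exact_mod_cast h)
  refine kl_M15 M (e - u) v f ?_ ?_ ?_ ?_
  · have a : Nat.Coprime M 3 := ((Nat.Prime.coprime_iff_not_dvd Nat.prime_three).2 hM3).symm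
    have b : Nat.Coprime M 5 := ((Nat.Prime.coprime_iff_not_dvd Nat.prime_five).2 hM5).symm
    exact Nat.Coprime.mul_right a b
  · intro q hq hq2 hqM hqN hqv
    have hq' : Prime (q : ℤ) := Nat.prime_iff_prime_int.1 hq
    have hqM' : (q : ℤ) ∣ e + u := by rw [hM]; exact_mod_cast hqM
    have n2 : ¬ (q : ℤ) ∣ 2 := fun h =>
      hq2 ((Nat.prime_dvd_prime_iff_eq hq Nat.prime_two).1 (by exact_mod_cast h))
    have d1 : (q : ℤ) ∣ 2 * e := by
      have := dvd_add hqM' hqN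
      rwa [show e + u + (e - u) = 2 * e by ring] at this
    have d1' := (hq'.dvd_or_dvd d1).resolve_left n2
    have d2 : (q : ℤ) ∣ u := (dvd_add_right d1').1 hqM'
    exact kl_nosq p hp u v 6 h2 q hq d2 hqv
  · rw [← hM]; linarith
  · rintro rfl
    simp at h3

lemma kl_two3 : J(2 | 3) = -1 := by norm_num

lemma kl_key4 (p : ℕ) (hp : p.Prime) (h24 : p % 24 = 1) (h5 : p % 5 = 1 ∨ p % 5 = 4)
    (e f u v : ℤ) (he : 0 < e) (hf : 0 ≤ f)
    (h1 : (p : ℤ) = e ^ 2 - 10 * f ^ 2) (h2 : (p : ℤ) = u ^ 2 + 6 * v ^ 2) :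
    ((5 : ℤ) ∣ v → J(e | 15) = 1) ∧ ((5 : ℤ) ∣ u → J(e | 15) = -1) := by
  have hf3 : (3 : ℤ) ∣ f := by
    have := kl_sq3 e
    have := kl_sq3 f
    omega
  have he3 : ¬ (3 : ℤ) ∣ e := by
    intro h
    have := kl_sq3 f
    obtain ⟨e', rfl⟩ := h
    obtain ⟨f', rfl⟩ := hf3
    ring_nf at h1
    omega
  have he5 : ¬ (5 : ℤ) ∣ e := by
    rintro ⟨e', rfl⟩
    ring_nf at h1
    omega
  -- normalise the sign of `u`
  wlog hu : (3 : ℤ) ∣ e - u generalizing u with H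
  · have := H (-u) (by rw [h2]; ring) ?_
    · exact ⟨this.1, fun h => this.2 (by omega)⟩
    · have hd : (3 : ℤ) ∣ (e - u) * (e + u) := by
        obtain ⟨f', rfl⟩ := hf3
        exact ⟨30 * f' ^ 2 + 2 * v ^ 2, by linear_combination h2 - h1⟩
      have := (Int.prime_three.dvd_or_dvd hd).resolve_left hu
      omega
  constructor
  · intro hv
    -- normalise `e` modulo 5 with the unit `19 + 6 * √10`
    have H : ∀ e f : ℤ, 0 < e → (p : ℤ) = e ^ 2 - 10 * f ^ 2 → (3 : ℤ) ∣ e - u → ¬ (3 : ℤ) ∣ e →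
        ¬ (5 : ℤ) ∣ e → (5 : ℤ) ∣ e - u → J(e | 15) = 1 := by
      intro e f he h1 a b c d
      have := kl_core p hp e f u v he h1 h2 (by omega) (by omega)
      rw [kl_modeq (e + u) (2 * e) 15 (by push_cast; omega), jacobiSym.mul_left, kl_two15,
        one_mul] at this
      exact this
    by_cases hc : (5 : ℤ) ∣ e - u
    · exact H e f he h1 hu he3 he5 hc
    · have hd : (5 : ℤ) ∣ (e - u) * (e + u) := by
        obtain ⟨v', rfl⟩ := hv
        exact ⟨2 * f ^ 2 + 30 * v' ^ 2, by linear_combination h2 - h1⟩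
      have hd' := ((Nat.prime_iff_prime_int.1 Nat.prime_five).dvd_or_dvd hd).resolve_left hc
      have := H (19 * e + 60 * f) (6 * e + 19 * f) (by omega) (by rw [h1]; ring) (by omega)
        (by omega) (by omega) (by omega)
      rw [← this]
      have e1 : ∀ z : ℤ, J(z | 15) = J(z | 3) * J(z | 5) := fun z => jacobiSym.mul_right z 3 5
      rw [e1, e1, kl_modeq (19 * e + 60 * f) e 3 (by push_cast; omega),
        kl_modeq (19 * e + 60 * f) (-1 * e) 5 (by push_cast; omega), jacobiSym.mul_left (-1)]
      norm_num
  · intro hu5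
    have := kl_core p hp e f u v he h1 h2 (by omega) (by omega)
    have e1 : ∀ z : ℤ, J(z | 15) = J(z | 3) * J(z | 5) := fun z => jacobiSym.mul_right z 3 5
    rw [e1, kl_modeq (e + u) (2 * e) 3 (by push_cast; omega),
        kl_modeq (e + u) e 5 (by push_cast; omega), jacobiSym.mul_left, kl_two3] at this
    rw [e1]
    linarith

lemma kl_prod (p : ℕ) (hp : p.Prime) (hp8 : p % 8 = 1) (e f a b : ℤ)
    (h1 : (p : ℤ) = e ^ 2 - 10 * f ^ 2) (h2 : (p : ℤ) = a ^ 2 + 15 * b ^ 2)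
    (n1 : J(5 * f + 2 * e | p) ≠ 0) (n2 : J(a + 5 * b | p) ≠ 0) :
    J(a + 5 * b | p) = J(5 * f + 2 * e | p) := by
  have hns : ∀ z : ℤ, (p : ℤ) ≠ z ^ 2 := by
    intro z hz
    have : Prime (z ^ 2) := hz ▸ Nat.prime_iff_prime_int.1 hp
    exact not_prime_pow (by norm_num) this
  have hf : f ≠ 0 := by rintro rfl; exact hns e (by linarith)
  have hb : b ≠ 0 := by rintro rfl; exact hns a (by linarith)
  have s1 : J(f | p) = 1 := kl_symY p hp hp8 e f (-10) (by rw [h1]; ring) hf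
  have s2 : J(b | p) = 1 := kl_symY p hp hp8 a b 15 h2 hb
  have key : J(((5 * f + 2 * e) * b + a * f) ^ 2 | p)
      = J(2 * f * b * (5 * f + 2 * e) * (a + 5 * b) | p) := by
    apply kl_modeq
    exact ⟨4 * b ^ 2 + f ^ 2, by linear_combination (-4 * b ^ 2) * h1 - f ^ 2 * h2⟩
  simp only [jacobiSym.mul_left, jacobiSym.pow_left, s1, s2, kl_two p hp8, one_mul] at key
  have hs := sq_nonneg J((5 * f + 2 * e) * b + a * f | p)
  rcases jacobiSym.trichotomy (5 * f + 2 * e) p with h | h | h <;>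
  rcases jacobiSym.trichotomy (a + 5 * b) p with h' | h' | h' <;>
  simp_all

/-- The common criterion. -/
lemma kl_main (p : ℕ) (hp : p.Prime) (h24 : p % 24 = 1) (h5 : p % 5 = 1 ∨ p % 5 = 4) :
    ∃ j : ℤ, (j = 1 ∨ j = -1) ∧ ((∃ x y : ℤ, (p : ℤ) = x ^ 2 + 150 * y ^ 2) ↔ j = 1) ∧
      ((p % 80 = 1 ∨ p % 80 = 9) → ((∃ x y : ℤ, (p : ℤ) = x ^ 2 + 960 * y ^ 2) ↔ j = 1)) ∧
      ((p % 80 = 41 ∨ p % 80 = 49) → ((∃ x y : ℤ, (p : ℤ) = x ^ 2 + 960 * y ^ 2) ↔ j = -1)) := by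
  obtain ⟨e, f, he, hf, h1⟩ := kl_rep10 p hp h24 h5
  obtain ⟨u, v, h2⟩ := kl_rep6 p hp h24
  obtain ⟨a, b, h3⟩ := kl_rep15 p hp h24 h5
  have k4 := kl_key4 p hp h24 h5 e f u v he hf h1 h2
  have huv : (5 : ℤ) ∣ u ∨ (5 : ℤ) ∣ v := by
    have := kl_sq5 u
    have := kl_sq5 v
    omega
  have hj : J(e | 15) = 1 ∨ J(e | 15) = -1 := by tauto
  have k2 := kl_key2 p hp h24 e f he hf h1
  have hb4 : (4 : ℤ) ∣ b := by
    have := kl_sq16 a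
    have := kl_sq16 b
    omega
  obtain ⟨c, rfl⟩ := hb4
  have h80 : p % 80 = 1 ∨ p % 80 = 9 ∨ p % 80 = 41 ∨ p % 80 = 49 := by omega
  -- the value of the symbol for every representation by `x ^ 2 + 240 * y ^ 2`
  have H : ∀ a c : ℤ, (p : ℤ) = a ^ 2 + 240 * c ^ 2 →
      (((p + 40 * c) % 80 = 1 ∨ (p + 40 * c) % 80 = 9) → J(e | 15) = 1) ∧
      (((p + 40 * c) % 80 = 41 ∨ (p + 40 * c) % 80 = 49) → J(e | 15) = -1) := by
    intro a c h
    have k1 := kl_key1 p hp (by omega) a c h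
    have hne : J(a + 5 * (4 * c) | p) ≠ 0 := by
      rw [show a + 5 * (4 * c) = a + 20 * c by ring]
      have : (p + 40 * c) % 80 = 1 ∨ (p + 40 * c) % 80 = 9 ∨ (p + 40 * c) % 80 = 41 ∨
        (p + 40 * c) % 80 = 49 := by omega
      rcases this with h | h | h | h
      · rw [k1.1 (by tauto)]; norm_num
      · rw [k1.1 (by tauto)]; norm_num
      · rw [k1.2 (by tauto)]; norm_num
      · rw [k1.2 (by tauto)]; norm_num
    have kp := kl_prod p hp (by omega) e f a (4 * c) h1 (by rw [h]; ring)
      (by rw [k2]; rcases hj with h | h <;> rw [h] <;> norm_num) hne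
    rw [show a + 5 * (4 * c) = a + 20 * c by ring, k2] at kp
    rwa [kp] at k1
  have h240 : (p : ℤ) = a ^ 2 + 240 * c ^ 2 := by rw [h3]; ring
  have rep : c % 2 = 0 → ∃ x y : ℤ, (p : ℤ) = x ^ 2 + 960 * y ^ 2 := by
    intro hc
    obtain ⟨c', rfl⟩ : (2 : ℤ) ∣ c := by omega
    exact ⟨a, c', by rw [h240]; ring⟩
  have Hac := H a c h240
  refine ⟨J(e | 15), hj, ⟨?_, ?_⟩, fun hr => ⟨?_, ?_⟩, fun hr => ⟨?_, ?_⟩⟩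
  · rintro ⟨x, y, hxy⟩
    exact (kl_key4 p hp h24 h5 e f x (5 * y) he hf h1 (by rw [hxy]; ring)).1 ⟨y, rfl⟩
  · intro hj1
    rcases huv with h | h
    · have := k4.2 h
      omega
    · obtain ⟨w, rfl⟩ := h
      exact ⟨u, w, by rw [h2]; ring⟩
  · rintro ⟨x, y, hxy⟩
    exact (H x (2 * y) (by rw [hxy]; ring)).1 (by omega)
  · intro hj1
    apply rep
    by_contra hc
    have := Hac.2 (by omega)
    omega
  · rintro ⟨x, y, hxy⟩
    exact (H x (2 * y) (by rw [hxy]; ring)).2 (by omega)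
  · intro hj1
    apply rep
    by_contra hc
    have := Hac.1 (by omega)
    omega

theorem kaplansky_like_3 (p : ℕ) (hp : p.Prime) :
    ((p % 240 = 1 ∨ p % 240 = 169) → ((∃ x y : ℤ, (p : ℤ) = x ^ 2 + 150 * y ^ 2) ↔
      (∃ x y : ℤ, (p : ℤ) = x ^ 2 + 960 * y ^ 2))) ∧
    ((p % 240 = 49 ∨ p % 240 = 121) → Xor' (∃ x y : ℤ, (p : ℤ) = x ^ 2 + 150 * y ^ 2)
      (∃ x y : ℤ, (p : ℤ) = x ^ 2 + 960 * y ^ 2)) := by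
  constructor
  · intro h
    have h80 : p % 80 = 1 ∨ p % 80 = 9 := by omega
    obtain ⟨j, hj, h1, h2, h3⟩ := kl_main p hp (by omega) (by omega)
    rw [h1, h2 h80]
  · intro h
    have h80 : p % 80 = 41 ∨ p % 80 = 49 := by omega
    obtain ⟨j, hj, h1, h2, h3⟩ := kl_main p hp (by omega) (by omega)
    rw [h1, h3 h80]
    rcases hj with rfl | rfl
    · left; norm_num
    · right; norm_num
end

section
/- Let p be a prime with p ≡ 1 or 9 (mod 20), and let M, N, A, B be integers with p = M² + N², N even, M ≡ 1 (mod 4), and p = A² + 5B². Then: (a) if p ≡ 1 (mod 20), then A is even if and only if 5 divides M; (b) if p ≡ 9 (mod 20), then A is even if and only if 5 divides N. -/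
/-- If `r ≡ ±2 (mod 5)` is an odd prime, then `5` is a non-residue mod `r`. -/
lemma inert_dvd (r : ℕ) (hr : r.Prime) (h2 : r ≠ 2) (h5 : r % 5 = 2 ∨ r % 5 = 3) (U V : ℤ)
    (h : (r : ℤ) ∣ U ^ 2 - 5 * V ^ 2) : (r : ℤ) ∣ U ∧ (r : ℤ) ∣ V := by
  have n2 : ¬ IsSquare ((2 : ℕ) : ZMod 5) := by
    decide
  have n3 : ¬ IsSquare ((3 : ℕ) : ZMod 5) := by
    decide
  have : Fact r.Prime := ⟨hr⟩
  have : Fact (Nat.Prime 5) := ⟨by norm_num⟩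
  have hns : ¬ IsSquare ((5 : ℕ) : ZMod r) := by
    rw [← ZMod.exists_sq_eq_prime_iff_of_mod_four_eq_one (p := 5) (q := r) (by norm_num) h2]
    have : ((r : ℕ) : ZMod 5) = ((r % 5 : ℕ) : ZMod 5) := by simp
    rw [this]
    rcases h5 with h | h <;> rw [h] <;> assumption
  have hz : (U : ZMod r) ^ 2 - 5 * (V : ZMod r) ^ 2 = 0 := by
    have := (ZMod.intCast_zmod_eq_zero_iff_dvd (U ^ 2 - 5 * V ^ 2) r).2 h
    push_cast at this
    exact this
  have hV : (V : ZMod r) = 0 := by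
    by_contra hV
    apply hns
    refine ⟨(U : ZMod r) / V, ?_⟩
    field_simp
    push_cast
    linear_combination -hz
  have hU : (U : ZMod r) = 0 := by
    rw [hV] at hz
    simpa using hz
  exact ⟨(ZMod.intCast_zmod_eq_zero_iff_dvd U r).1 hU, (ZMod.intCast_zmod_eq_zero_iff_dvd V r).1 hV⟩

/-- An odd divisor `X` of `U² - 5V²`, sharing no inert prime with its cofactor, is not `±2 mod 5`. -/
lemma divisor_mod (n : ℕ) : ∀ X Y U V : ℤ, X.natAbs = n → X % 2 = 1 → X * Y = U ^ 2 - 5 * V ^ 2 →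
    (∀ r : ℕ, r.Prime → r ≠ 2 → (r % 5 = 2 ∨ r % 5 = 3) → (r : ℤ) ∣ X → ¬ (r : ℤ) ∣ Y) →
    X % 5 = 0 ∨ X % 5 = 1 ∨ X % 5 = 4 := by
  induction n using Nat.strong_induction_on with
  | _ n ih =>
    intro X Y U V hn hodd hXY hc
    by_cases h1 : n = 1
    · omega
    obtain ⟨r, hr, hrn⟩ := Nat.exists_prime_and_dvd h1
    have hrX : (r : ℤ) ∣ X := by
      rw [← hn] at hrn
      exact Int.natCast_dvd.2 hrn
    have hr2 : r ≠ 2 := by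
      rintro rfl
      push_cast at hrX
      omega
    have hr1 := hr.two_le
    have hrp : Prime (r : ℤ) := Nat.prime_iff_prime_int.1 hr
    obtain ⟨Z, hZ⟩ := hrX
    have hX0 : 0 < n := by omega
    by_cases hb : r % 5 = 2 ∨ r % 5 = 3
    · have hd : (r : ℤ) ∣ U ^ 2 - 5 * V ^ 2 := by
        rw [← hXY, hZ, mul_assoc]
        exact dvd_mul_right _ _
      obtain ⟨⟨U', hU⟩, ⟨V', hV⟩⟩ := inert_dvd r hr hr2 hb U V hd
      have hnY := hc r hr hr2 hb ⟨Z, hZ⟩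
      have e1 : Z * Y = r * (U' ^ 2 - 5 * V' ^ 2) := by
        apply mul_left_cancel₀ hrp.ne_zero
        rw [← mul_assoc, ← hZ, hXY, hU, hV]
        ring
      have hZd : (r : ℤ) ∣ Z := by
        have : (r : ℤ) ∣ Z * Y := ⟨_, e1⟩
        exact (hrp.dvd_or_dvd this).resolve_right hnY
      obtain ⟨W, hW⟩ := hZd
      have e2 : W * Y = U' ^ 2 - 5 * V' ^ 2 := by
        apply mul_left_cancel₀ hrp.ne_zero
        rw [← e1, hW]
        ring
      have hXW : X = (r : ℤ) * (r * W) := by rw [hZ, hW]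
      have hnat : n = r * (r * W.natAbs) := by
        rw [← hn, hXW, Int.natAbs_mul, Int.natAbs_mul]
        simp
      have hW0 : 0 < W.natAbs := by
        rcases Nat.eq_zero_or_pos W.natAbs with h | h
        · rw [h] at hnat
          omega
        · exact h
      have hlt : W.natAbs < n := by
        have h3 : 2 * W.natAbs ≤ r * W.natAbs := Nat.mul_le_mul_right _ hr1
        nlinarith
      have hWo : W % 2 = 1 := by
        rcases Int.emod_two_eq_zero_or_one W with h | h
        · exfalso
          have : (2 : ℤ) ∣ X := by
            rw [hXW]
            exact ((Int.dvd_of_emod_eq_zero h).mul_left _).mul_left _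
          omega
        · exact h
      have := ih _ hlt W Y U' V' rfl hWo e2
        (fun s hs hs2 hs5 hsW => hc s hs hs2 hs5 (by
          rw [hXW]
          exact (hsW.mul_left _).mul_left _))
      have hr5 : (r : ℤ) % 5 = 2 ∨ (r : ℤ) % 5 = 3 := by omega
      rw [hXW]
      rcases hr5 with h | h <;> rcases this with h' | h' | h' <;> simp [Int.mul_emod, h, h']
    · have hnat : n = r * Z.natAbs := by
        rw [← hn, hZ, Int.natAbs_mul]
        simp
      have hZ0 : 0 < Z.natAbs := by
        rcases Nat.eq_zero_or_pos Z.natAbs with h | h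
        · rw [h] at hnat
          omega
        · exact h
      have hlt : Z.natAbs < n := by nlinarith
      have hZo : Z % 2 = 1 := by
        rcases Int.emod_two_eq_zero_or_one Z with h | h
        · exfalso
          have : (2 : ℤ) ∣ X := by
            rw [hZ]
            exact (Int.dvd_of_emod_eq_zero h).mul_left _
          omega
        · exact h
      have := ih _ hlt Z (r * Y) U V rfl hZo (by rw [← hXY, hZ]; ring)
        (fun s hs hs2 hs5 hsZ hsY => by
          rcases (Nat.prime_iff_prime_int.1 hs).dvd_or_dvd hsY with h | h
          · have : s = r := (Nat.prime_dvd_prime_iff_eq hs hr).1 (Int.natCast_dvd_natCast.1 h)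
            subst this
            exact hb hs5
          · exact hc s hs hs2 hs5 (by rw [hZ]; exact hsZ.mul_left _) h)
      have hr5 : (r : ℤ) % 5 = 0 ∨ (r : ℤ) % 5 = 1 ∨ (r : ℤ) % 5 = 4 := by omega
      rw [hZ]
      rcases hr5 with h | h | h <;> rcases this with h' | h' | h' <;> simp [Int.mul_emod, h, h']

lemma sum_mod (p : ℕ) (hp : p.Prime) (S T A B : ℤ) (hST : (p : ℤ) = S ^ 2 + T ^ 2)
    (hAB : (p : ℤ) = A ^ 2 + 5 * B ^ 2) (ho : (A + S) % 2 = 1) :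
    (A + S) % 5 = 0 ∨ (A + S) % 5 = 1 ∨ (A + S) % 5 = 4 := by
  refine divisor_mod _ (A + S) (A - S) T B rfl ho (by linear_combination hST - hAB) ?_
  intro r hr hr2 hr5 h1 h2
  have hrp : Prime (r : ℤ) := Nat.prime_iff_prime_int.1 hr
  have hA : (r : ℤ) ∣ A := by
    have h : (r : ℤ) ∣ 2 * A := by
      have := dvd_add h1 h2
      ring_nf at this
      rwa [mul_comm] at this
    rcases hrp.dvd_or_dvd h with h | h
    · exact absurd ((Nat.prime_dvd_prime_iff_eq hr Nat.prime_two).1 (by exact_mod_cast h)) hr2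
    · exact h
  have hd : (r : ℤ) ∣ T ^ 2 - 5 * B ^ 2 := by
    have : T ^ 2 - 5 * B ^ 2 = (A + S) * (A - S) := by linear_combination hAB - hST
    rw [this]
    exact h1.mul_right _
  obtain ⟨-, hB⟩ := inert_dvd r hr hr2 hr5 T B hd
  have hrr : ((r * r : ℕ) : ℤ) ∣ p := by
    obtain ⟨a, rfl⟩ := hA
    obtain ⟨b, rfl⟩ := hB
    refine ⟨a ^ 2 + 5 * b ^ 2, ?_⟩
    rw [hAB]
    push_cast
    ring
  have hrr' : r * r ∣ p := by exact_mod_cast hrr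
  have := (Nat.squarefree_iff_prime_squarefree.1 hp.squarefree) r hr
  exact this hrr'

theorem muskat_thm1 (p : ℕ) (hp : p.Prime) (hp20 : p % 20 = 1 ∨ p % 20 = 9)
    (M N A B : ℤ) (hMN : (p : ℤ) = M ^ 2 + N ^ 2) (hN : Even N)
    (hM : M ≡ 1 [ZMOD 4]) (hAB : (p : ℤ) = A ^ 2 + 5 * B ^ 2) :
    (p % 20 = 1 → (Even A ↔ (5 : ℤ) ∣ M)) ∧
    (p % 20 = 9 → (Even A ↔ (5 : ℤ) ∣ N)) := by
  have hM2 : M % 2 = 1 := by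
    have : M % 4 = 1 := hM
    omega
  have hN2 : N % 2 = 0 := Int.even_iff.1 hN
  have k1 : A % 2 = 0 → _ := fun h => sum_mod p hp M N A B hMN hAB (by omega)
  have k2 : A % 2 = 0 → _ := fun h => sum_mod p hp (-M) N A B (by rw [hMN]; ring) hAB (by omega)
  have k3 : A % 2 = 1 → _ := fun h =>
    sum_mod p hp N M A B (by rw [hMN]; ring) hAB (by omega)
  have k4 : A % 2 = 1 → _ := fun h =>
    sum_mod p hp (-N) M A B (by rw [hMN]; ring) hAB (by omega)
  have sq : ∀ x : ℤ, (x % 5 = 0 ∧ x ^ 2 % 5 = 0) ∨ ((x % 5 = 1 ∨ x % 5 = 4) ∧ x ^ 2 % 5 = 1) ∨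
      ((x % 5 = 2 ∨ x % 5 = 3) ∧ x ^ 2 % 5 = 4) := by
    intro x
    have : x % 5 = 0 ∨ x % 5 = 1 ∨ x % 5 = 2 ∨ x % 5 = 3 ∨ x % 5 = 4 := by omega
    rcases this with h | h | h | h | h <;> simp [pow_two, Int.mul_emod, h]
  have sM := sq M
  have sN := sq N
  have sA := sq A
  rw [Int.even_iff]
  generalize M ^ 2 = m at *
  generalize N ^ 2 = n at *
  generalize A ^ 2 = a at *
  generalize B ^ 2 = b at *
  clear sq
  rcases Int.emod_two_eq_zero_or_one A with h | h
  · have k1 := k1 h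
    have k2 := k2 h
    clear k3 k4
    constructor <;> intro hp1 <;> omega
  · have k3 := k3 h
    have k4 := k4 h
    clear k1 k2
    constructor <;> intro hp1 <;> omega
end

section
/- Let p be a prime with p ≡ 1 or 7 (mod 8), and let M, N be integers with p = M² + 7N² and such that M ≡ 1 (mod 4) or N ≡ 1 (mod 4). Then: (a) there exist integers A, B with p = A² + 14B² if and only if 2p + M + N ≡ 3 (mod 8); (b) there exist integers C, D with p = 7C² + 2D² if and only if 2p + M + N ≡ 7 (mod 8). -/
lemma mk_inert (q : ℕ) (hqp : q.Prime) (hq : q % 8 = 3 ∨ q % 8 = 5) (x y : ℤ)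
    (h : (q : ℤ) ∣ x ^ 2 - 2 * y ^ 2) : (q : ℤ) ∣ x ∧ (q : ℤ) ∣ y := by
  have : Fact q.Prime := ⟨hqp⟩
  have hq2 : q ≠ 2 := by omega
  have h2 : ¬ IsSquare (2 : ZMod q) := by
    rw [ZMod.exists_sq_eq_two_iff hq2]; omega
  have h' : (x : ZMod q) ^ 2 - 2 * (y : ZMod q) ^ 2 = 0 := by
    have := (ZMod.intCast_zmod_eq_zero_iff_dvd _ q).mpr h
    push_cast at this
    exact this
  have hy : (y : ZMod q) = 0 := by
    by_contra hy
    apply h2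
    refine ⟨(x : ZMod q) / y, ?_⟩
    field_simp
    linear_combination -h'
  have hx : (x : ZMod q) = 0 := by
    rw [hy] at h'
    have : (x : ZMod q) ^ 2 = 0 := by linear_combination h'
    exact pow_eq_zero_iff (two_ne_zero) |>.mp this
  exact ⟨(ZMod.intCast_zmod_eq_zero_iff_dvd _ q).mp hx,
    (ZMod.intCast_zmod_eq_zero_iff_dvd _ q).mp hy⟩

lemma mk_primes (n : ℕ) : n % 2 = 1 → (∀ q : ℕ, q.Prime → q ∣ n → q % 8 = 1 ∨ q % 8 = 7) →
    n % 8 = 1 ∨ n % 8 = 7 := by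
  induction n using induction_on_primes with
  | zero => intro h; omega
  | one => intro _ _; left; rfl
  | prime_mul p n hp ih =>
    intro h1 h2
    have hn : n % 2 = 1 := by
      rcases Nat.mod_two_eq_zero_or_one n with h | h
      · rw [Nat.mul_mod, h] at h1; simp at h1
      · exact h
    have a := ih hn (fun q hq hd => h2 q hq (hd.mul_left p))
    have b := h2 p hp (dvd_mul_right p n)
    rw [Nat.mul_mod]
    rcases a with a | a <;> rcases b with b | b <;> rw [a, b] <;> simp

lemma mk_key (n : ℕ) : ∀ u v x y : ℤ, u.natAbs = n → u % 2 = 1 →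
    u * v = 7 * (x ^ 2 - 2 * y ^ 2) →
    (∀ q : ℕ, q.Prime → (q % 8 = 3 ∨ q % 8 = 5) → (q : ℤ) ∣ u → (q : ℤ) ∣ v → False) →
    u % 8 = 1 ∨ u % 8 = 7 := by
  induction n using Nat.strong_induction_on with
  | _ n ih =>
  intro u v x y hn hu huv hg
  by_cases hall : ∀ q : ℕ, q.Prime → q ∣ u.natAbs → q % 8 = 1 ∨ q % 8 = 7
  · have := mk_primes u.natAbs (by omega) hall
    omega
  · push Not at hall
    obtain ⟨q, hqp, hqd, hq1, hq7⟩ := hall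
    have hqu : (q : ℤ) ∣ u := Int.natCast_dvd.mpr hqd
    have hqodd : q % 2 = 1 := by
      rcases Nat.mod_two_eq_zero_or_one q with h | h
      · exfalso
        have : (2 : ℤ) ∣ u := dvd_trans (by omega) hqu
        omega
      · exact h
    have hq : q % 8 = 3 ∨ q % 8 = 5 := by omega
    have hqP : Prime (q : ℤ) := Nat.prime_iff_prime_int.mp hqp
    have hqne : (q : ℤ) ≠ 0 := hqP.ne_zero
    have hq7' : ¬ (q : ℤ) ∣ 7 := by
      intro h
      have h : q ∣ 7 := by exact_mod_cast h
      rcases (Nat.dvd_prime (by norm_num)).mp h with h | h <;> omega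
    have hd : (q : ℤ) ∣ x ^ 2 - 2 * y ^ 2 := by
      have : (q : ℤ) ∣ 7 * (x ^ 2 - 2 * y ^ 2) := huv ▸ hqu.mul_right v
      exact (hqP.dvd_or_dvd this).resolve_left hq7'
    obtain ⟨⟨x', rfl⟩, ⟨y', rfl⟩⟩ := mk_inert q hqp hq x y hd
    obtain ⟨u', rfl⟩ := hqu
    have hv : ¬ (q : ℤ) ∣ v := fun h => hg q hqp hq (dvd_mul_right _ _) h
    have h1 : u' * v = q * (7 * (x' ^ 2 - 2 * y' ^ 2)) := by
      apply mul_left_cancel₀ hqne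
      linear_combination huv
    have h2 : (q : ℤ) ∣ u' := by
      have : (q : ℤ) ∣ u' * v := ⟨_, h1⟩
      exact (hqP.dvd_or_dvd this).resolve_right hv
    obtain ⟨w, rfl⟩ := h2
    have h3 : w * v = 7 * (x' ^ 2 - 2 * y' ^ 2) := by
      apply mul_left_cancel₀ hqne
      linear_combination h1
    have hqq : ((q : ℤ) * q) % 8 = 1 := by
      rw [Int.mul_emod]
      rcases (by omega : (q : ℤ) % 8 = 3 ∨ (q : ℤ) % 8 = 5) with h | h <;> rw [h] <;> rfl
    obtain ⟨k, hk⟩ : ∃ k : ℤ, (q : ℤ) * q = 8 * k + 1 := ⟨(q : ℤ) * q / 8, by omega⟩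
    have hE : (q : ℤ) * (q * w) = 8 * (k * w) + w := by linear_combination w * hk
    have hw : w % 2 = 1 := by omega
    have hlt : w.natAbs < n := by
      rw [← hn, Int.natAbs_mul, Int.natAbs_mul, Int.natAbs_natCast]
      have hwpos : 0 < w.natAbs := by omega
      have := hqp.two_le
      nlinarith [Nat.mul_le_mul this this, Nat.mul_le_mul_right w.natAbs (Nat.mul_le_mul this this)]
    have := ih _ hlt w v x' y' rfl hw h3
      (fun r hr hr8 hrw hrv => hg r hr hr8 ((hrw.mul_left _).mul_left _) hrv)
    omega

lemma mk_sq16 (x : ℤ) : (x % 4 = 0 ∧ x ^ 2 % 16 = 0) ∨ (x % 4 = 2 ∧ x ^ 2 % 16 = 4) ∨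
    ((x % 8 = 1 ∨ x % 8 = 7) ∧ x ^ 2 % 16 = 1) ∨
    ((x % 8 = 3 ∨ x % 8 = 5) ∧ x ^ 2 % 16 = 9) := by
  obtain ⟨k, hk⟩ : ∃ k, x = 8 * k + x % 8 := ⟨x / 8, by omega⟩
  have h0 := Int.emod_nonneg x (by norm_num : (8 : ℤ) ≠ 0)
  have h1 := Int.emod_lt_of_pos x (by norm_num : (0 : ℤ) < 8)
  generalize x % 8 = r at *
  have hs : x ^ 2 = 16 * (4 * k ^ 2 + k * r) + r ^ 2 := by rw [hk]; ring
  generalize 4 * k ^ 2 + k * r = t at *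
  interval_cases r <;> omega

lemma mk_reduce (n : ℕ) : ∀ a b c u v m : ℤ, a.toNat = n → 0 < a → a * c - b ^ 2 = 14 →
    m = a * u ^ 2 + 2 * b * u * v + c * v ^ 2 →
    (∃ x y : ℤ, m = x ^ 2 + 14 * y ^ 2) ∨ (∃ x y : ℤ, m = 7 * x ^ 2 + 2 * y ^ 2) ∨
    (∃ x y : ℤ, 3 * m = x ^ 2 + 14 * y ^ 2) := by
  induction n using Nat.strong_induction_on with
  | _ n ih =>
  intro a b c u v m hn ha hd hm
  obtain ⟨t, e, hbe, he1, he2⟩ : ∃ t e : ℤ, b = a * t + e ∧ -a ≤ 2 * e ∧ 2 * e ≤ a := by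
    refine ⟨(2 * b + a) / (2 * a), b - a * ((2 * b + a) / (2 * a)), by ring, ?_, ?_⟩
    · have := Int.mul_ediv_self_le (x := 2 * b + a) (k := 2 * a) (by omega)
      linarith
    · have := Int.lt_mul_ediv_self_add (x := 2 * b + a) (k := 2 * a) (by omega)
      linarith
  obtain ⟨f, hf⟩ : ∃ f, f = c - a * t ^ 2 - 2 * e * t := ⟨_, rfl⟩
  obtain ⟨w, hw⟩ : ∃ w, w = u + t * v := ⟨_, rfl⟩
  have hd' : a * f - e ^ 2 = 14 := by subst hf; subst hbe; linear_combination hd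
  have hm' : m = a * w ^ 2 + 2 * e * w * v + f * v ^ 2 := by
    subst hf; subst hbe; subst hw; linear_combination hm
  clear hf hw hbe hm hd
  have hfpos : 0 < f := by
    by_contra h
    nlinarith [sq_nonneg e]
  by_cases hfa : f < a
  · exact ih f.toNat (by omega) f e a v w m rfl hfpos (by linarith) (by linarith)
  · push Not at hfa
    have ha4 : a ≤ 4 := by
      by_contra h
      nlinarith
    interval_cases a
    · have : e = 0 := by omega
      subst this
      left; exact ⟨w, v, by rw [hm']; linear_combination v ^ 2 * hd'⟩
    · have h1 : -1 ≤ e := by omega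
      have h2 : e ≤ 1 := by omega
      interval_cases e
      · omega
      · right; left
        have : f = 7 := by omega
        exact ⟨v, w, by rw [hm', this]; ring⟩
      · omega
    · right; right
      exact ⟨3 * w + e * v, v, by rw [hm']; linear_combination v ^ 2 * hd'⟩
    · have h1 : -2 ≤ e := by omega
      have h2 : e ≤ 2 := by omega
      interval_cases e <;> omega

lemma mk_sqfree (p : ℕ) (hp : p.Prime) (q : ℕ) (hq : q.Prime) (h : (q : ℤ) ^ 2 ∣ p) : False := by
  have h : q ^ 2 ∣ p := by exact_mod_cast h
  have h1 : q ∣ p := dvd_trans (dvd_pow_self q two_ne_zero) h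
  have h2 : q = p := (Nat.prime_dvd_prime_iff_eq hq hp).mp h1
  subst h2
  have := Nat.le_of_dvd hp.pos h
  nlinarith [hp.two_le]

lemma mk_exists (p : ℕ) (hp : p.Prime) (hp8 : p % 8 = 1 ∨ p % 8 = 7)
    (M N : ℤ) (hMN : (p : ℤ) = M ^ 2 + 7 * N ^ 2) :
    (∃ A B : ℤ, (p : ℤ) = A ^ 2 + 14 * B ^ 2) ∨ (∃ C D : ℤ, (p : ℤ) = 7 * C ^ 2 + 2 * D ^ 2) := by
  have : Fact p.Prime := ⟨hp⟩
  have hpP : Prime (p : ℤ) := Nat.prime_iff_prime_int.mp hp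
  obtain ⟨s, hs⟩ := (ZMod.exists_sq_eq_two_iff (p := p) (by omega)).mpr hp8
  have hN : (N : ZMod p) ≠ 0 := by
    intro h
    obtain ⟨n, hn⟩ := (ZMod.intCast_zmod_eq_zero_iff_dvd _ p).mp h
    have hM : (p : ℤ) ∣ M ^ 2 := ⟨1 - 7 * p * n ^ 2, by rw [hn] at hMN; linear_combination -hMN⟩
    obtain ⟨k, hk⟩ := hpP.dvd_of_dvd_pow hM
    exact mk_sqfree p hp p hp ⟨k ^ 2 + 7 * n ^ 2, by
      rw [hn, hk] at hMN; linear_combination hMN⟩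
  have hz : (M : ZMod p) ^ 2 + 7 * (N : ZMod p) ^ 2 = 0 := by
    have : ((p : ℤ) : ZMod p) = ((M ^ 2 + 7 * N ^ 2 : ℤ) : ZMod p) := by rw [← hMN]
    push_cast at this
    rw [← this]; simp
  obtain ⟨b, hb⟩ : ∃ b : ℤ, (b : ZMod p) = s * M / N := ZMod.intCast_surjective _
  have hb2 : (p : ℤ) ∣ b ^ 2 + 14 := by
    rw [← ZMod.intCast_zmod_eq_zero_iff_dvd]
    push_cast
    rw [hb]
    field_simp
    linear_combination (2 : ZMod p) * hz - (M : ZMod p) ^ 2 * hs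
  obtain ⟨c, hc⟩ := hb2
  rcases mk_reduce _ p b c 1 0 p rfl (by exact_mod_cast hp.pos) (by linarith) (by ring) with
    h | h | ⟨x, y, h⟩
  · exact Or.inl h
  · exact Or.inr h
  · exfalso
    have hx := mk_sq16 x
    have hy := mk_sq16 y
    omega

lemma mk_par (p M N : ℤ) (hMN : p = M ^ 2 + 7 * N ^ 2) (hcong : M % 4 = 1 ∨ N % 4 = 1) :
    (p % 8 = 1 → M % 4 = 1 ∧ N % 4 = 0) ∧ (p % 8 = 7 → M % 4 = 0 ∧ N % 4 = 1) := by
  have sM := mk_sq16 M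
  have sN := mk_sq16 N
  omega

/-- squares of odd numbers, modulo 16 -/
lemma mk_odd (x : ℤ) (h : x % 2 = 1) : ((x % 8 = 1 ∨ x % 8 = 7) ∧ x ^ 2 % 16 = 1) ∨
    ((x % 8 = 3 ∨ x % 8 = 5) ∧ x ^ 2 % 16 = 9) := by
  have := mk_sq16 x
  omega

lemma mk_four (x : ℤ) (h : x % 4 = 0) : x ^ 2 % 16 = 0 := by
  have := mk_sq16 x
  omega

lemma mk_parA (p A B : ℤ) (h : p = A ^ 2 + 14 * B ^ 2) :
    (p % 8 = 1 → A % 2 = 1 ∧ B % 2 = 0) ∧ (p % 8 = 7 → A % 2 = 1 ∧ B % 2 = 1) := by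
  have sA := mk_sq16 A
  have sB := mk_sq16 B
  omega

lemma mk_parC (p C D : ℤ) (h : p = 7 * C ^ 2 + 2 * D ^ 2) :
    (p % 8 = 1 → C % 2 = 1 ∧ D % 2 = 1) ∧ (p % 8 = 7 → C % 2 = 1 ∧ D % 2 = 0) := by
  have sC := mk_sq16 C
  have sD := mk_sq16 D
  omega

lemma mk_endA (P M N A B : ℤ) (hMN : P = M ^ 2 + 7 * N ^ 2) (hAB : P = A ^ 2 + 14 * B ^ 2)
    (hP : P % 8 = 7) (hM : M % 4 = 0) (hN : N % 4 = 1) (hA : A % 2 = 1) (hB : B % 2 = 1)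
    (hu : (A + M) % 8 = 1 ∨ (A + M) % 8 = 7) : (2 * P + M + N) % 8 = 3 := by
  have sM := mk_four M hM
  have sB : B ^ 2 % 8 = 1 := by
    have := mk_odd B hB
    omega
  have hr : (7 * N ^ 2 - A ^ 2 - 14) % 16 = 0 := by omega
  clear hMN hAB sM sB hB
  rcases mk_odd N (by omega) with ⟨h1, h2⟩ | ⟨h1, h2⟩ <;>
  rcases mk_odd A hA with ⟨h3, h4⟩ | ⟨h3, h4⟩ <;> omega

lemma mk_endC (P M N C D : ℤ) (hMN : P = M ^ 2 + 7 * N ^ 2) (hCD : P = 7 * C ^ 2 + 2 * D ^ 2)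
    (hP : P % 8 = 1) (hM : M % 4 = 1) (hN : N % 4 = 0) (hC : C % 2 = 1) (hD : D % 2 = 1)
    (hu : (C + N) % 8 = 1 ∨ (C + N) % 8 = 7) : (2 * P + M + N) % 8 = 7 := by
  have sN := mk_four N hN
  have sD : D ^ 2 % 8 = 1 := by
    have := mk_odd D hD
    omega
  have hr : (M ^ 2 - 7 * C ^ 2 - 2) % 16 = 0 := by omega
  clear hMN hCD sN sD hD
  rcases mk_odd M (by omega) with ⟨h1, h2⟩ | ⟨h1, h2⟩ <;>
  rcases mk_odd C hC with ⟨h3, h4⟩ | ⟨h3, h4⟩ <;> omega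

lemma mk_finish (k v s n b M : ℤ) (u : ℤ) (hu : u = 8 * k + s) (hs : s = 1 ∨ s = 7)
    (hM : M = u - v) (hM4 : M % 4 = 1) (h : v * u = 28 * n ^ 2 - 14 * b ^ 2) :
    (M + 4 * n) % 8 = 1 := by
  have hn := mk_sq16 n
  have hb := mk_sq16 b
  have e : v * u = 8 * (v * k) + v * s := by rw [hu]; ring
  rw [e] at h
  generalize v * k = t at *
  rcases hs with rfl | rfl <;> omega

lemma mk_finish2 (k v s m d N : ℤ) (u : ℤ) (hu : u = 8 * k + s) (hs : s = 1 ∨ s = 7)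
    (hN : N = u - v) (hN4 : N % 4 = 1) (h : 7 * (v * u) = 4 * m ^ 2 - 2 * d ^ 2) :
    (N + 4 * m) % 8 = 1 := by
  have e : v * u = 8 * (v * k) + v * s := by rw [hu]; ring
  rw [e] at h
  have hm : (m % 2 = 0 ∧ m ^ 2 % 4 = 0) ∨ (m % 2 = 1 ∧ m ^ 2 % 4 = 1) := by
    have := mk_sq16 m
    omega
  have hd : d ^ 2 % 4 = 0 ∨ d ^ 2 % 4 = 1 := by
    have := mk_sq16 d
    omega
  generalize v * k = t at *
  generalize m ^ 2 = m2 at *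
  generalize d ^ 2 = d2 at *
  subst hN hu
  rcases hs with rfl | rfl <;> rcases hm with hm | hm <;> rcases hd with hd | hd <;> omega

set_option maxHeartbeats 1000000 in
/-- case p = A^2 + 14 B^2 -/
lemma mk_a (p : ℕ) (hp : p.Prime) (hp8 : p % 8 = 1 ∨ p % 8 = 7)
    (M N : ℤ) (hMN : (p : ℤ) = M ^ 2 + 7 * N ^ 2) (hcong : M % 4 = 1 ∨ N % 4 = 1)
    (A B : ℤ) (hAB : (p : ℤ) = A ^ 2 + 14 * B ^ 2) (hA : M % 2 = 1 → A % 4 = M % 4) :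
    (2 * (p : ℤ) + M + N) % 8 = 3 := by
  have sM := mk_par p M N hMN hcong
  have sA := mk_parA p A B hAB
  have hg : ∀ q : ℕ, q.Prime → (q % 8 = 3 ∨ q % 8 = 5) → (q : ℤ) ∣ A → (q : ℤ) ∣ M → False := by
    intro q hq hq8 ⟨a, ha⟩ ⟨m, hm⟩
    have hqP : Prime (q : ℤ) := Nat.prime_iff_prime_int.mp hq
    have hq7' : ¬ (q : ℤ) ∣ 7 := by
      intro h
      have h : q ∣ 7 := by exact_mod_cast h
      rcases (Nat.dvd_prime (by norm_num)).mp h with h | h <;> omega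
    have h1 : (q : ℤ) ∣ 7 * (N ^ 2 - 2 * B ^ 2) :=
      ⟨q * (a ^ 2 - m ^ 2), by rw [ha] at hAB; rw [hm] at hMN; linear_combination hAB - hMN⟩
    obtain ⟨⟨n, hn⟩, -⟩ := mk_inert q hq hq8 N B ((hqP.dvd_or_dvd h1).resolve_left hq7')
    exact mk_sqfree p hp q hq ⟨m ^ 2 + 7 * n ^ 2, by
      rw [hm, hn] at hMN; linear_combination hMN⟩
  rcases hp8 with hp8 | hp8
  · have hA' := hA (by omega)
    obtain ⟨v, hv⟩ : ∃ v, A - M = 2 * v := ⟨(A - M) / 2, by omega⟩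
    obtain ⟨n, hn⟩ : ∃ n, N = 4 * n := ⟨N / 4, by omega⟩
    obtain ⟨b, hb⟩ : ∃ b, B = 2 * b := ⟨B / 2, by omega⟩
    have hA2 : A = M + 2 * v := by linarith
    have hvu : v * (M + v) = 28 * n ^ 2 - 14 * b ^ 2 := by
      rw [hA2, hb] at hAB; rw [hn] at hMN
      linarith
    have hu := mk_key _ (M + v) (4 * v) N B rfl (by omega)
      (by rw [hn, hb]; linear_combination 4 * hvu) (by
        intro q hq hq8 h1 h2
        have hqP : Prime (q : ℤ) := Nat.prime_iff_prime_int.mp hq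
        have h3 : ¬ (q : ℤ) ∣ 4 := by
          intro h
          have h : q ∣ 2 ^ 2 := by exact_mod_cast h
          have := (Nat.prime_dvd_prime_iff_eq hq Nat.prime_two).mp (hq.dvd_of_dvd_pow h)
          omega
        have h4 := (hqP.dvd_or_dvd h2).resolve_left h3
        have h5 : (q : ℤ) ∣ M := (dvd_add_left h4).mp h1
        exact hg q hq hq8 (by rw [hA2]; exact dvd_add h5 (h4.mul_left 2)) h5)
    have := mk_finish ((M + v) / 8) v ((M + v) % 8) n b M (M + v) (by omega) hu (by ring)
      (by omega) hvu
    omega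
  · have hu := mk_key _ (A + M) (A - M) N B rfl (by omega) (by linear_combination hMN - hAB) (by
        intro q hq hq8 h1 h2
        have hqP : Prime (q : ℤ) := Nat.prime_iff_prime_int.mp hq
        have h3 : ¬ (q : ℤ) ∣ 2 := by
          intro h
          have h : q ∣ 2 := by exact_mod_cast h
          have := (Nat.prime_dvd_prime_iff_eq hq Nat.prime_two).mp h
          omega
        have h4 : (q : ℤ) ∣ 2 * A := by
          have := dvd_add h1 h2
          ring_nf at this ⊢; exact this
        have h5 : (q : ℤ) ∣ A := (hqP.dvd_or_dvd h4).resolve_left h3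
        exact hg q hq hq8 h5 ((dvd_add_right h5).mp h1))
    exact mk_endA p M N A B hMN hAB (by omega) (by omega) (by omega) (by omega) (by omega) hu

set_option maxHeartbeats 1000000 in
/-- case p = 7 C^2 + 2 D^2 -/
lemma mk_b (p : ℕ) (hp : p.Prime) (hp8 : p % 8 = 1 ∨ p % 8 = 7)
    (M N : ℤ) (hMN : (p : ℤ) = M ^ 2 + 7 * N ^ 2) (hcong : M % 4 = 1 ∨ N % 4 = 1)
    (C D : ℤ) (hCD : (p : ℤ) = 7 * C ^ 2 + 2 * D ^ 2) (hC : N % 2 = 1 → C % 4 = N % 4) :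
    (2 * (p : ℤ) + M + N) % 8 = 7 := by
  have sM := mk_par p M N hMN hcong
  have sC := mk_parC p C D hCD
  have hg : ∀ q : ℕ, q.Prime → (q % 8 = 3 ∨ q % 8 = 5) → (q : ℤ) ∣ C → (q : ℤ) ∣ N → False := by
    intro q hq hq8 ⟨a, ha⟩ ⟨n, hn⟩
    have h1 : (q : ℤ) ∣ M ^ 2 - 2 * D ^ 2 :=
      ⟨q * 7 * (a ^ 2 - n ^ 2), by rw [ha] at hCD; rw [hn] at hMN; linear_combination hCD - hMN⟩
    obtain ⟨⟨m, hm⟩, -⟩ := mk_inert q hq hq8 M D h1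
    exact mk_sqfree p hp q hq ⟨m ^ 2 + 7 * n ^ 2, by
      rw [hm, hn] at hMN; linear_combination hMN⟩
  have h7 : ∀ q : ℕ, q.Prime → (q % 8 = 3 ∨ q % 8 = 5) → ¬ (q : ℤ) ∣ 2 ^ 2 * 7 ^ 2 := by
    intro q hq hq8 h
    have h : q ∣ 2 ^ 2 * 7 ^ 2 := by exact_mod_cast h
    rcases (hq.dvd_mul).mp h with h | h
    · have := (Nat.prime_dvd_prime_iff_eq hq Nat.prime_two).mp (hq.dvd_of_dvd_pow h)
      omega
    · have := (Nat.prime_dvd_prime_iff_eq hq (by norm_num)).mp (hq.dvd_of_dvd_pow h)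
      omega
  rcases hp8 with hp8 | hp8
  · have hu := mk_key _ (C + N) (7 ^ 2 * (C - N)) M D rfl (by omega)
      (by linear_combination 7 * hMN - 7 * hCD) (by
        intro q hq hq8 h1 h2
        have hqP : Prime (q : ℤ) := Nat.prime_iff_prime_int.mp hq
        have h2' := (hqP.dvd_or_dvd h2).resolve_left (fun h => h7 q hq hq8 (h.mul_left _))
        have h4 : (q : ℤ) ∣ 2 * C := by
          have := dvd_add h1 h2'
          ring_nf at this ⊢; exact this
        have h5 : (q : ℤ) ∣ C := (hqP.dvd_or_dvd h4).resolve_left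
          (fun h => h7 q hq hq8 (dvd_trans h (by norm_num)))
        exact hg q hq hq8 h5 ((dvd_add_right h5).mp h1))
    exact mk_endC p M N C D hMN hCD (by omega) (by omega) (by omega) (by omega) (by omega) hu
  · have hC' := hC (by omega)
    obtain ⟨v, hv⟩ : ∃ v, C - N = 2 * v := ⟨(C - N) / 2, by omega⟩
    obtain ⟨m, hm⟩ : ∃ m, M = 4 * m := ⟨M / 4, by omega⟩
    obtain ⟨d, hd⟩ : ∃ d, D = 2 * d := ⟨D / 2, by omega⟩
    have hC2 : C = N + 2 * v := by linarith
    have hvu : 7 * (v * (N + v)) = 4 * m ^ 2 - 2 * d ^ 2 := by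
      rw [hC2, hd] at hCD; rw [hm] at hMN
      linarith
    have hu := mk_key _ (N + v) (2 ^ 2 * 7 ^ 2 * v) M D rfl (by omega)
      (by rw [hm, hd]; linear_combination 28 * hvu) (by
        intro q hq hq8 h1 h2
        have hqP : Prime (q : ℤ) := Nat.prime_iff_prime_int.mp hq
        have h4 := (hqP.dvd_or_dvd h2).resolve_left (h7 q hq hq8)
        have h5 : (q : ℤ) ∣ N := (dvd_add_left h4).mp h1
        exact hg q hq hq8 (by rw [hC2]; exact dvd_add h5 (h4.mul_left 2)) h5)
    have hN4 : N % 4 = 1 := by omega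
    have := mk_finish2 ((N + v) / 8) v ((N + v) % 8) m d N (N + v) (by omega) hu (by ring)
      hN4 hvu
    omega

theorem muskat_thm3 (p : ℕ) (hp : p.Prime) (hp8 : p % 8 = 1 ∨ p % 8 = 7)
    (M N : ℤ) (hMN : (p : ℤ) = M ^ 2 + 7 * N ^ 2)
    (hcong : M ≡ 1 [ZMOD 4] ∨ N ≡ 1 [ZMOD 4]) :
    ((∃ A B : ℤ, (p : ℤ) = A ^ 2 + 14 * B ^ 2) ↔
      2 * (p : ℤ) + M + N ≡ 3 [ZMOD 8]) ∧
    ((∃ C D : ℤ, (p : ℤ) = 7 * C ^ 2 + 2 * D ^ 2) ↔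
      2 * (p : ℤ) + M + N ≡ 7 [ZMOD 8]) := by
  have hc : M % 4 = 1 ∨ N % 4 = 1 := hcong
  have ha : (∃ A B : ℤ, (p : ℤ) = A ^ 2 + 14 * B ^ 2) → (2 * (p : ℤ) + M + N) % 8 = 3 := by
    rintro ⟨A, B, h⟩
    by_cases hs : M % 2 = 1 → A % 4 = M % 4
    · exact mk_a p hp hp8 M N hMN hc A B h hs
    · refine mk_a p hp hp8 M N hMN hc (-A) B (by rw [h]; ring) ?_
      have sM := mk_par p M N hMN hc
      have sA := mk_parA p A B h
      omega
  have hb : (∃ C D : ℤ, (p : ℤ) = 7 * C ^ 2 + 2 * D ^ 2) → (2 * (p : ℤ) + M + N) % 8 = 7 := by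
    rintro ⟨C, D, h⟩
    by_cases hs : N % 2 = 1 → C % 4 = N % 4
    · exact mk_b p hp hp8 M N hMN hc C D h hs
    · refine mk_b p hp hp8 M N hMN hc (-C) D (by rw [h]; ring) ?_
      have sM := mk_par p M N hMN hc
      have sC := mk_parC p C D h
      omega
  have he := mk_exists p hp hp8 M N hMN
  refine ⟨⟨ha, fun h => ?_⟩, ⟨hb, fun h => ?_⟩⟩
  · have h : (2 * (p : ℤ) + M + N) % 8 = 3 := h
    rcases he with he | he
    · exact he
    · have := hb he
      omega
  · have h : (2 * (p : ℤ) + M + N) % 8 = 7 := h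
    rcases he with he | he
    · have := ha he
      omega
    · exact he
end
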